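/- arXiv:2412.00974 — 7 statements merged into one kernel-verified Lean document; each statement's English description precedes it below -/
import Mathlib

section
/- Let n be even, s a positive integer, ε̃ ∈ (0,1/2], and β ∈ (0,0.4]. If s ≤ min(0.00005/β², 0.004·√n/ε̃²), then there exists a probability distribution C on ([n]^s)³ (a multivariate coupling) such that: (a) the three marginals of C are U_n^{⊗s}, P^•, and (p^⋄)^{⊗s} respectively; and (b) with C-probability at least 0.98 the three coordinate sample sequences are equal, i.e. C({(S₁,S₂,S₃) : S₁ = S₂ = S₃}) ≥ 0.98. -/
open Finset

/-- The distribution `p^Z` on `[n] = Fin (2m)`: for a sign vector `Z` (encoded by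
booleans, `true ↦ +1`, `false ↦ −1`), one element of each consecutive pair gets
probability `(1 + 2·Z·ε̃)/n` and the other `(1 − 2·Z·ε̃)/n`. -/
noncomputable def pZ (m : ℕ) (eps : ℝ) (Z : Fin m → Bool) : Fin (2*m) → ℝ :=
  fun i =>
    let sign : ℝ := if Z ⟨i.val / 2, by have := i.isLt; omega⟩ then 1 else -1
    if i.val % 2 = 1 then (1 + 2 * sign * eps) / (2*m)
    else (1 - 2 * sign * eps) / (2*m)

/-- `P^•`: the distribution of `s` i.i.d. samples drawn from `p^Z` where the sign
vector `Z` is itself drawn uniformly at random (a uniform mixture over `Z` of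
`(p^Z)^{⊗s}`). -/
noncomputable def Pbullet (m s : ℕ) (eps : ℝ) (x : Fin s → Fin (2*m)) : ℝ :=
  (∑ Z : Fin m → Bool, ∏ j, pZ m eps Z (x j)) / 2 ^ m

/-- The distribution `p^⋄` on `[n] = Fin (2m)` assigning `(1+2β)/n` to one parity
class and `(1−2β)/n` to the other. -/
noncomputable def pdiamond (m : ℕ) (β : ℝ) : Fin (2*m) → ℝ :=
  fun i => if i.val % 2 = 1 then (1 + 2*β) / (2*m) else (1 - 2*β) / (2*m)

/-!
A common lower bound `M` of three distributions `U`, `P`, `Q` is coupled on the diagonal, and the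
excesses over `M` are coupled independently; with `M` the pointwise minimum, the diagonal receives
mass at least `1 - tv(U, P) - tv(U, Q)`. Here `U` is uniform, `P = P^•` and `Q = (p^⋄)^{⊗s}`.

Both total variation distances are bounded through the `χ²`-divergence to `U`, that is, through
the second moment `∑ p² / U`. It is multiplicative over independent samples, which settles
`Q`. For the mixture `P` it is the average over two independent sign vectors `Z`, `W` of
`(1 + (4ε²/m) ⟨Z, W⟩)^s ≤ exp ((4sε²/m) ⟨Z, W⟩)` (the method of Ingster), and the Rademacher bound
`cosh a ≤ exp (a² / 2)` makes this average at most `exp (8s²ε⁴/m)`.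
-/

open scoped BigOperators

section Coupling

variable {α : Type*} [Fintype α]

lemma sum_sum_mul_mul_div_sq {f g h : α → ℝ} {δ : ℝ} (hf : ∀ x, 0 ≤ f x)
    (hfδ : ∑ x, f x = δ) (hgδ : ∑ x, g x = δ) (hhδ : ∑ x, h x = δ) (x : α) :
    ∑ y, ∑ z, f x * g y * h z / δ ^ 2 = f x := by
  simp only [← sum_div, ← mul_sum, ← sum_mul, hgδ, hhδ]
  rcases eq_or_ne δ 0 with hδ | hδ
  · rw [hδ, sum_eq_zero_iff_of_nonneg fun x _ => hf x] at hfδ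
    simp [hfδ x (mem_univ x)]
  · field_simp

section DiagonalCoupling

variable [DecidableEq α]

/-- The coupling of `p`, `q`, `r` that places a common lower bound `M` on the diagonal and couples
the excesses `p - M`, `q - M`, `r - M` independently. If `∑ M = 1`, then all excesses vanish and
so does the second summand, since `x / 0 = 0`. -/
noncomputable def diagonalCoupling (M p q r : α → ℝ) : α × α × α → ℝ :=
  fun t => (if t.1 = t.2.1 ∧ t.2.1 = t.2.2 then M t.1 else 0) +
    (p t.1 - M t.1) * (q t.2.1 - M t.2.1) * (r t.2.2 - M t.2.2) / (1 - ∑ x, M x) ^ 2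

lemma diagonalCoupling_swap_left (M p q r : α → ℝ) (x y z : α) :
    diagonalCoupling M p q r (x, y, z) = diagonalCoupling M q p r (y, x, z) := by
  simp only [diagonalCoupling]
  by_cases hxy : x = y
  · subst hxy
    ring_nf
  · simp only [hxy, Ne.symm hxy, false_and, if_false]
    ring

lemma diagonalCoupling_rotate (M p q r : α → ℝ) (x y z : α) :
    diagonalCoupling M p q r (x, y, z) = diagonalCoupling M r p q (z, x, y) := by
  have hdiag : (if x = y ∧ y = z then M x else 0) = if z = x ∧ x = y then M z else 0 := by
    grind
  simp only [diagonalCoupling, hdiag]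
  ring

lemma sum_sum_diagonalCoupling {M p q r : α → ℝ} (hMp : M ≤ p) (hp : ∑ x, p x = 1)
    (hq : ∑ x, q x = 1) (hr : ∑ x, r x = 1) (x : α) :
    ∑ y, ∑ z, diagonalCoupling M p q r (x, y, z) = p x := by
  have sum_excess (v : α → ℝ) (hv : ∑ x, v x = 1) : ∑ x, (v x - M x) = 1 - ∑ x, M x := by
    rw [sum_sub_distrib, hv]
  have sum_diagonal : ∑ y, ∑ z, (if x = y ∧ y = z then M x else 0) = M x := by
    simp [ite_and]
  simp only [diagonalCoupling, sum_add_distrib]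
  rw [sum_diagonal, sum_sum_mul_mul_div_sq (f := fun x => p x - M x) (g := fun x => q x - M x)
    (h := fun x => r x - M x) (fun x => sub_nonneg.2 (hMp x)) (sum_excess p hp)
    (sum_excess q hq) (sum_excess r hr), add_sub_cancel]

lemma le_diagonalCoupling {M p q r : α → ℝ} (hMp : M ≤ p) (hMq : M ≤ q) (hMr : M ≤ r)
    (t : α × α × α) :
    (if t.1 = t.2.1 ∧ t.2.1 = t.2.2 then M t.1 else 0) ≤ diagonalCoupling M p q r t :=
  le_add_of_nonneg_right <| div_nonneg
    (mul_nonneg (mul_nonneg (sub_nonneg.2 (hMp _)) (sub_nonneg.2 (hMq _))) (sub_nonneg.2 (hMr _)))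
    (sq_nonneg _)

end DiagonalCoupling

lemma exists_coupling_of_le {M p q r : α → ℝ} (hM : 0 ≤ M)
    (hMp : M ≤ p) (hMq : M ≤ q) (hMr : M ≤ r)
    (hp : ∑ x, p x = 1) (hq : ∑ x, q x = 1) (hr : ∑ x, r x = 1) :
    ∃ C ∈ stdSimplex ℝ (α × α × α),
      (∀ x, ∑ y, ∑ z, C (x, y, z) = p x) ∧
      (∀ y, ∑ x, ∑ z, C (x, y, z) = q y) ∧
      (∀ z, ∑ x, ∑ y, C (x, y, z) = r z) ∧
      ∑ x, M x ≤ ∑ x, C (x, x, x) := by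
  classical
  have marginal_left := sum_sum_diagonalCoupling hMp hp hq hr
  refine ⟨diagonalCoupling M p q r, ⟨fun t => ?_, ?_⟩, marginal_left, fun y => ?_, fun z => ?_,
    sum_le_sum fun x _ => ?_⟩
  · refine le_trans ?_ (le_diagonalCoupling hMp hMq hMr t)
    split_ifs
    exacts [hM _, le_rfl]
  · simp only [Fintype.sum_prod_type, marginal_left, hp]
  · simp only [diagonalCoupling_swap_left M p q r]
    exact sum_sum_diagonalCoupling hMq hq hp hr y
  · simp only [diagonalCoupling_rotate M p q r]
    exact sum_sum_diagonalCoupling hMr hr hp hq z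
  · simpa using le_diagonalCoupling hMp hMq hMr (x, x, x)

lemma one_sub_half_sum_abs_le_sum_min {p q r : α → ℝ} (hp : ∑ x, p x = 1)
    (hq : ∑ x, q x = 1) (hr : ∑ x, r x = 1) :
    1 - (∑ x, |q x - p x|) / 2 - (∑ x, |r x - p x|) / 2 ≤ ∑ x, min (p x) (min (q x) (r x)) := by
  have sum_min (v : α → ℝ) (hv : ∑ x, v x = 1) :
      ∑ x, min (p x) (v x) = 1 - (∑ x, |v x - p x|) / 2 := by
    simp only [inf_eq_half_smul_add_sub_abs_sub' ℝ, smul_eq_mul, ← mul_sum, sum_sub_distrib,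
      sum_add_distrib, hv, hp]
    ring
  have min_add_min_le (x : α) :
      min (p x) (q x) + min (p x) (r x) - p x ≤ min (p x) (min (q x) (r x)) := by
    have hpq := min_le_left (p x) (q x)
    have hpr := min_le_left (p x) (r x)
    refine le_min ?_ (le_min ?_ ?_)
    · linarith
    · linarith [min_le_right (p x) (q x)]
    · linarith [min_le_right (p x) (r x)]
  calc
    _ = ∑ x, (min (p x) (q x) + min (p x) (r x) - p x) := by
      rw [sum_sub_distrib, sum_add_distrib, sum_min q hq, sum_min r hr, hp]
      ring
    _ ≤ _ := sum_le_sum fun x _ => min_add_min_le x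

theorem exists_coupling_one_sub_half_sum_abs_le {p q r : α → ℝ} (hp : p ∈ stdSimplex ℝ α)
    (hq : q ∈ stdSimplex ℝ α) (hr : r ∈ stdSimplex ℝ α) :
    ∃ C ∈ stdSimplex ℝ (α × α × α),
      (∀ x, ∑ y, ∑ z, C (x, y, z) = p x) ∧
      (∀ y, ∑ x, ∑ z, C (x, y, z) = q y) ∧
      (∀ z, ∑ x, ∑ y, C (x, y, z) = r z) ∧
      1 - (∑ x, |q x - p x|) / 2 - (∑ x, |r x - p x|) / 2 ≤ ∑ x, C (x, x, x) := by
  obtain ⟨C, hC, hCp, hCq, hCr, hdiag⟩ := exists_coupling_of_le (M := p ⊓ (q ⊓ r))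
    (le_inf hp.1 (le_inf hq.1 hr.1)) inf_le_left (inf_le_right.trans inf_le_left)
    (inf_le_right.trans inf_le_right) hp.2 hq.2 hr.2
  exact ⟨C, hC, hCp, hCq, hCr, (one_sub_half_sum_abs_le_sum_min hp.2 hq.2 hr.2).trans hdiag⟩

end Coupling

section ChiSquare

variable {α : Type*} [Fintype α]

/-- The inner product in `L²(u)` of the densities of `p` and `q` with respect to `u`. When
`p` and the everywhere positive `u` have mass `1`, the `χ²`-divergence of `p` from `u` is
`densityInner u p p - 1`. -/
noncomputable def densityInner (u p q : α → ℝ) : ℝ := ∑ x, p x * q x / u x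

theorem sum_abs_sub_le_sqrt_densityInner_sub_one {u p : α → ℝ} (hu0 : ∀ x, 0 < u x)
    (hu : ∑ x, u x = 1) (hp : ∑ x, p x = 1) :
    ∑ x, |p x - u x| ≤ √(densityInner u p p - 1) := by
  have chiSq_eq : ∑ x, |p x - u x| ^ 2 / u x = densityInner u p p - 1 := by
    have expand (x : α) : |p x - u x| ^ 2 / u x = p x * p x / u x - 2 * p x + u x := by
      have := (hu0 x).ne'
      rw [sq_abs]
      field_simp
      ring
    simp only [expand, sum_add_distrib, sum_sub_distrib, ← mul_sum, hu, hp, densityInner]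
    ring
  refine Real.le_sqrt_of_sq_le ?_
  have cauchy_schwarz := sq_sum_div_le_sum_sq_div univ (fun x => |p x - u x|) fun x _ => hu0 x
  rwa [hu, div_one, chiSq_eq] at cauchy_schwarz

lemma densityInner_expect {κ : Type*} [Fintype κ] (u : α → ℝ) (p q : κ → α → ℝ) :
    densityInner u (fun x => 𝔼 z, p z x) (fun x => 𝔼 z, q z x) =
      𝔼 z, 𝔼 w, densityInner u (p z) (q w) := by
  simp only [densityInner, expect_mul_expect, expect_div, expect_sum_comm]

lemma expect_mem_stdSimplex {κ : Type*} [Fintype κ] [Nonempty κ] {p : κ → α → ℝ}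
    (hp : ∀ z, p z ∈ stdSimplex ℝ α) : (fun x => 𝔼 z, p z x) ∈ stdSimplex ℝ α :=
  ⟨fun x => expect_nonneg fun z _ => (hp z).1 x, by
    rw [← expect_sum_comm]
    simp only [(hp _).2, Fintype.expect_one]⟩

/-- The law `p^{⊗s}` of `s` independent samples from `p`. -/
def iidDist (s : ℕ) (p : α → ℝ) : (Fin s → α) → ℝ := fun x => ∏ j, p (x j)

lemma iidDist_mem_stdSimplex (s : ℕ) {p : α → ℝ} (hp : p ∈ stdSimplex ℝ α) :
    iidDist s p ∈ stdSimplex ℝ (Fin s → α) :=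
  ⟨fun _ => prod_nonneg fun _ _ => hp.1 _, by
    simp only [iidDist, ← Fintype.sum_pow, hp.2, one_pow]⟩

lemma densityInner_iidDist (s : ℕ) (u p q : α → ℝ) :
    densityInner (iidDist s u) (iidDist s p) (iidDist s q) = densityInner u p q ^ s := by
  simp only [densityInner, iidDist, Fintype.sum_pow, ← prod_mul_distrib, ← prod_div_distrib]

end ChiSquare

section RandomSigns

/-- The sign encoded by a boolean: `true ↦ 1` and `false ↦ -1`. -/
def boolSign (b : Bool) : ℝ := if b then 1 else -1

lemma boolSign_sq (b : Bool) : boolSign b ^ 2 = 1 := by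
  cases b <;> simp [boolSign]

variable {ι : Type*} [Fintype ι] [DecidableEq ι]

lemma expect_exp_sum_mul_boolSign (c : ι → ℝ) :
    𝔼 Z : ι → Bool, Real.exp (∑ k, c k * boolSign (Z k)) = ∏ k, Real.cosh (c k) := by
  have sum_bool (k : ι) : ∑ b, Real.exp (c k * boolSign b) = 2 * Real.cosh (c k) := by
    simp [boolSign, Real.cosh_eq, mul_div_cancel₀]
  simp only [Fintype.expect_eq_sum_div_card, Real.exp_sum]
  rw [← Fintype.prod_sum fun k b => Real.exp (c k * boolSign b)]
  simp only [sum_bool, prod_mul_distrib]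
  simp

lemma expect_exp_sum_mul_boolSign_le (c : ι → ℝ) :
    𝔼 Z : ι → Bool, Real.exp (∑ k, c k * boolSign (Z k)) ≤ Real.exp (∑ k, c k ^ 2 / 2) := by
  rw [expect_exp_sum_mul_boolSign, Real.exp_sum]
  exact prod_le_prod (fun k _ => (Real.cosh_pos _).le) fun k _ => Real.cosh_le_exp_half_sq _

end RandomSigns

section PairedDistributions

lemma sum_fin_two_mul {A : Type*} [AddCommMonoid A] (m : ℕ) (f : Fin (2 * m) → A) :
    ∑ i, f i = ∑ k : Fin m, (f ⟨2 * k, by omega⟩ + f ⟨2 * k + 1, by omega⟩) := by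
  rw [← Equiv.sum_comp (finProdFinEquiv.trans (finCongr (mul_comm m 2))), Fintype.sum_prod_type]
  refine sum_congr rfl fun k _ => ?_
  rw [Fin.sum_univ_two]
  congr 2 <;> ext <;> simp [finProdFinEquiv, add_comm]

/-- The uniform distribution on `Fin (2 * m)`. -/
noncomputable def uniformDist (m : ℕ) : Fin (2 * m) → ℝ := fun _ => 1 / (2 * m)

lemma uniformDist_mem_stdSimplex {m : ℕ} (hm : m ≠ 0) :
    uniformDist m ∈ stdSimplex ℝ (Fin (2 * m)) :=
  ⟨fun _ => by unfold uniformDist; positivity, by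
    simp only [uniformDist, sum_const, card_univ, Fintype.card_fin, nsmul_eq_mul]
    push_cast
    field_simp⟩

lemma iidDist_uniformDist_pos {m : ℕ} (hm : m ≠ 0) (s : ℕ) (x : Fin s → Fin (2 * m)) :
    0 < iidDist s (uniformDist m) x :=
  prod_pos fun _ _ => by unfold uniformDist; positivity

variable {m : ℕ} {eps : ℝ}

lemma pZ_two_mul (eps : ℝ) (Z : Fin m → Bool) (k : Fin m) :
    pZ m eps Z ⟨2 * k, by omega⟩ = (1 - 2 * boolSign (Z k) * eps) / (2 * m) := by
  simp [pZ, boolSign]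

lemma pZ_two_mul_add_one (eps : ℝ) (Z : Fin m → Bool) (k : Fin m) :
    pZ m eps Z ⟨2 * k + 1, by omega⟩ = (1 + 2 * boolSign (Z k) * eps) / (2 * m) := by
  have half_eq : (⟨(2 * k + 1) / 2, by omega⟩ : Fin m) = k := by ext; simp only; omega
  simp [pZ, boolSign, half_eq, Nat.add_mod]

lemma pdiamond_eq_pZ (m : ℕ) (β : ℝ) : pdiamond m β = pZ m β fun _ => true := by
  ext i
  simp [pdiamond, pZ]

lemma pZ_mem_stdSimplex (hm : m ≠ 0) (heps : |eps| ≤ 1 / 2) (Z : Fin m → Bool) :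
    pZ m eps Z ∈ stdSimplex ℝ (Fin (2 * m)) := by
  obtain ⟨hlow, hupp⟩ := abs_le.1 heps
  constructor
  · intro i
    unfold pZ
    dsimp only
    split_ifs <;> exact div_nonneg (by linarith) (by positivity)
  · have pair_sum (a : ℝ) : (1 - a) / (2 * m) + (1 + a) / (2 * m) = 1 / m := by
      field_simp
      ring
    simp only [sum_fin_two_mul, pZ_two_mul, pZ_two_mul_add_one, pair_sum]
    simp [hm]

lemma densityInner_pZ (hm : m ≠ 0) (eps : ℝ) (Z Z' : Fin m → Bool) :
    densityInner (uniformDist m) (pZ m eps Z) (pZ m eps Z') =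
      1 + ∑ k, 4 * eps ^ 2 / m * boolSign (Z k) * boolSign (Z' k) := by
  have one_eq : (1 : ℝ) = ∑ _k : Fin m, 1 / (m : ℝ) := by simp [hm]
  rw [densityInner, sum_fin_two_mul, one_eq, ← sum_add_distrib]
  refine sum_congr rfl fun k _ => ?_
  simp only [pZ_two_mul, pZ_two_mul_add_one, uniformDist]
  field_simp
  ring

lemma densityInner_iidDist_pZ_le (hm : m ≠ 0) (heps : |eps| ≤ 1 / 2) (s : ℕ)
    (Z Z' : Fin m → Bool) :
    densityInner (iidDist s (uniformDist m)) (iidDist s (pZ m eps Z)) (iidDist s (pZ m eps Z')) ≤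
      Real.exp (∑ k, s * (4 * eps ^ 2 / m) * boolSign (Z k) * boolSign (Z' k)) := by
  have inner_nonneg : 0 ≤ densityInner (uniformDist m) (pZ m eps Z) (pZ m eps Z') :=
    sum_nonneg fun i _ => div_nonneg
      (mul_nonneg ((pZ_mem_stdSimplex hm heps Z).1 i) ((pZ_mem_stdSimplex hm heps Z').1 i))
      ((uniformDist_mem_stdSimplex hm).1 i)
  simp only [densityInner_iidDist, mul_assoc (s : ℝ), ← mul_sum (a := (s : ℝ)), Real.exp_nat_mul]
  refine pow_le_pow_left₀ inner_nonneg ?_ s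
  rw [densityInner_pZ hm, add_comm]
  exact Real.add_one_le_exp _

lemma iidDist_pdiamond_mem_stdSimplex (hm : m ≠ 0) {β : ℝ} (hβ : |β| ≤ 1 / 2) (s : ℕ) :
    iidDist s (pdiamond m β) ∈ stdSimplex ℝ (Fin s → Fin (2 * m)) :=
  iidDist_mem_stdSimplex s (pdiamond_eq_pZ m β ▸ pZ_mem_stdSimplex hm hβ _)

lemma densityInner_iidDist_pdiamond_le (hm : m ≠ 0) (β : ℝ) (s : ℕ) :
    densityInner (iidDist s (uniformDist m)) (iidDist s (pdiamond m β)) (iidDist s (pdiamond m β)) ≤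
      Real.exp (4 * s * β ^ 2) := by
  have inner_eq :
      densityInner (uniformDist m) (pdiamond m β) (pdiamond m β) = 4 * β ^ 2 + 1 := by
    have sum_eq : ∑ _k : Fin m, 4 * β ^ 2 / m * 1 * 1 = 4 * β ^ 2 := by
      simp [mul_div_cancel₀, hm]
    rw [pdiamond_eq_pZ, densityInner_pZ hm, add_comm]
    simpa only [boolSign, if_true, add_left_inj] using sum_eq
  calc
    _ = (4 * β ^ 2 + 1) ^ s := by rw [densityInner_iidDist, inner_eq]
    _ ≤ Real.exp (4 * β ^ 2) ^ s :=
      pow_le_pow_left₀ (by positivity) (Real.add_one_le_exp _) s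
    _ = Real.exp (4 * s * β ^ 2) := by
      rw [← Real.exp_nat_mul]
      ring_nf

lemma Pbullet_eq_expect (m s : ℕ) (eps : ℝ) :
    Pbullet m s eps = fun x => 𝔼 Z, iidDist s (pZ m eps Z) x := by
  ext x
  simp [Pbullet, iidDist, Fintype.expect_eq_sum_div_card]

lemma Pbullet_mem_stdSimplex (hm : m ≠ 0) (heps : |eps| ≤ 1 / 2) (s : ℕ) :
    Pbullet m s eps ∈ stdSimplex ℝ (Fin s → Fin (2 * m)) := by
  rw [Pbullet_eq_expect]
  exact expect_mem_stdSimplex fun Z => iidDist_mem_stdSimplex s (pZ_mem_stdSimplex hm heps Z)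

theorem densityInner_Pbullet_le (hm : m ≠ 0) (heps : |eps| ≤ 1 / 2) (s : ℕ) :
    densityInner (iidDist s (uniformDist m)) (Pbullet m s eps) (Pbullet m s eps) ≤
      Real.exp (8 * (s * eps ^ 2) ^ 2 / m) := by
  rw [Pbullet_eq_expect, densityInner_expect]
  refine expect_le univ_nonempty fun Z _ => ?_
  calc
    _ ≤ 𝔼 Z' : Fin m → Bool,
          Real.exp (∑ k, s * (4 * eps ^ 2 / m) * boolSign (Z k) * boolSign (Z' k)) :=
      expect_le_expect fun Z' _ => densityInner_iidDist_pZ_le hm heps s Z Z'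
    _ ≤ Real.exp (∑ k, (s * (4 * eps ^ 2 / m) * boolSign (Z k)) ^ 2 / 2) :=
      expect_exp_sum_mul_boolSign_le _
    _ = Real.exp (8 * (s * eps ^ 2) ^ 2 / m) := by
      congr 1
      simp only [mul_pow _ (boolSign _), boolSign_sq, mul_one, sum_const, card_univ,
        Fintype.card_fin, nsmul_eq_mul]
      field_simp
      ring

end PairedDistributions

section Constants

lemma sqrt_sub_one_le_of_le_exp {c y : ℝ} (hc : c ≤ 0.0003) (hy : y ≤ Real.exp c) :
    √(y - 1) ≤ 0.02 := by
  have exp_le : Real.exp 0.0003 ≤ 1 / (1 - 0.0003) :=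
    Real.exp_bound_div_one_sub_of_interval (by norm_num) (by norm_num)
  rw [Real.sqrt_le_left (by norm_num)]
  calc
    y - 1 ≤ 1 / (1 - 0.0003) - 1 := by linarith [Real.exp_le_exp.2 hc]
    _ ≤ 0.02 ^ 2 := by norm_num

lemma eight_mul_sq_div_le {m s eps : ℝ} (hm : 0 < m) (hs : 0 ≤ s) (heps : 0 < eps)
    (h : s ≤ 0.004 * √(2 * m) / eps ^ 2) : 8 * (s * eps ^ 2) ^ 2 / m ≤ 0.0003 := by
  rw [le_div_iff₀ (by positivity)] at h
  have sq_le : (s * eps ^ 2) ^ 2 ≤ 0.004 ^ 2 * (2 * m) := by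
    simpa [mul_pow, Real.sq_sqrt hm.le] using pow_le_pow_left₀ (by positivity) h 2
  rw [div_le_iff₀ hm]
  linarith

lemma four_mul_mul_sq_le {s β : ℝ} (hβ : 0 < β) (h : s ≤ 0.00005 / β ^ 2) :
    4 * s * β ^ 2 ≤ 0.0003 := by
  rw [le_div_iff₀ (by positivity)] at h
  linarith

end Constants

/-- multivariate coupling of the three hard distributions:
for even `n = 2m`, positive `s`, `ε̃ ∈ (0,1/2]`, `β ∈ (0,0.4]`, if
`s ≤ min(0.00005/β², 0.004·√n/ε̃²)` then there is a distribution `C` on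
`([n]^s)³` whose three marginals are `U_n^{⊗s}`, `P^•` and `(p^⋄)^{⊗s}`, and
which puts mass at least `0.98` on triples with all three coordinates equal. -/
theorem stmt3 (m s : ℕ) (hs : 0 < s) (eps β : ℝ)
    (heps : eps ∈ Set.Ioc (0:ℝ) (1/2)) (hβ : β ∈ Set.Ioc (0:ℝ) 0.4)
    (hsamples : (s : ℝ) ≤ min (0.00005 / β ^ 2) (0.004 * Real.sqrt (2*m) / eps ^ 2)) :
    ∃ C : (Fin s → Fin (2*m)) × (Fin s → Fin (2*m)) × (Fin s → Fin (2*m)) → ℝ,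
      (∀ t, 0 ≤ C t) ∧ (∑ t, C t = 1) ∧
      (∀ x, (∑ y, ∑ z, C (x, y, z)) = ∏ _j : Fin s, (1 / (2*m : ℝ))) ∧
      (∀ y, (∑ x, ∑ z, C (x, y, z)) = Pbullet m s eps y) ∧
      (∀ z, (∑ x, ∑ y, C (x, y, z)) = ∏ j, pdiamond m β (z j)) ∧
      0.98 ≤ ∑ x, C (x, x, x) := by
  obtain ⟨hsβ, hseps⟩ := le_min_iff.1 hsamples
  have hm : m ≠ 0 := by
    rintro rfl
    norm_num at hseps
    omega
  have abs_eps_le : |eps| ≤ 1 / 2 := by rw [abs_of_pos heps.1]; exact heps.2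
  have abs_β_le : |β| ≤ 1 / 2 := by rw [abs_of_pos hβ.1]; linarith [hβ.2]
  have hU := iidDist_mem_stdSimplex s (uniformDist_mem_stdSimplex hm)
  have hP := Pbullet_mem_stdSimplex hm abs_eps_le s
  have hQ := iidDist_pdiamond_mem_stdSimplex hm abs_β_le s
  have sum_abs_P_le : ∑ x, |Pbullet m s eps x - iidDist s (uniformDist m) x| ≤ 0.02 :=
    (sum_abs_sub_le_sqrt_densityInner_sub_one (iidDist_uniformDist_pos hm s) hU.2 hP.2).trans
      (sqrt_sub_one_le_of_le_exp (eight_mul_sq_div_le (by positivity) s.cast_nonneg heps.1 hseps)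
        (densityInner_Pbullet_le hm abs_eps_le s))
  have sum_abs_Q_le : ∑ x, |iidDist s (pdiamond m β) x - iidDist s (uniformDist m) x| ≤ 0.02 :=
    (sum_abs_sub_le_sqrt_densityInner_sub_one (iidDist_uniformDist_pos hm s) hU.2 hQ.2).trans
      (sqrt_sub_one_le_of_le_exp (four_mul_mul_sq_le hβ.1 hsβ)
        (densityInner_iidDist_pdiamond_le hm β s))
  obtain ⟨C, hC, hCU, hCP, hCQ, hdiag⟩ := exists_coupling_one_sub_half_sum_abs_le hU hP hQ
  exact ⟨C, hC.1, hC.2, hCU, hCP, hCQ, by linarith⟩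
end

section
/- Let n be even and β ∈ [0, 0.4]. Let p^⋄ be the distribution on [n] assigning probability (1+2β)/n to each even element and (1−2β)/n to each odd element. Then for every positive integer s, the total variation distance between s i.i.d. samples from the uniform distribution and s i.i.d. samples from p^⋄ satisfies tv(U_n^{⊗s} − (p^⋄)^{⊗s}) ≤ √(2s)·β. -/
/-- Total variation distance `(1/2)·Σₓ |p x − q x|` on a finite set. -/
noncomputable def tvOn {X : Type*} [Fintype X] (p q : X → ℝ) : ℝ :=
  (∑ x, |p x - q x|) / 2

/-!
The square of the total variation distance is at most `1 - BC²`, where `BC` is the Bhattacharyya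
coefficient. Since `BC` is multiplicative over independent samples, Weierstrass' product inequality
`∏ (1 - δᵢ) ≥ 1 - ∑ δᵢ` makes the defect `1 - BC²` subadditive, so the defect of `s` samples is at
most `s` times that of a single one. For the uniform distribution against `p^⋄` the latter is
`(1 - √(1 - 4β²)) / 2 ≤ 2β²`.
-/

/-- The Bhattacharyya coefficient (fidelity) `∑ₓ √(p x · q x)` of two nonnegative weights on a
finite set: unlike the total variation distance, it is multiplicative over product
distributions. -/
noncomputable def bhattacharyya {X : Type*} [Fintype X] (p q : X → ℝ) : ℝ :=
  ∑ x, √(p x * q x)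

/-- The product `⨂ᵢ p i` of a finite family of weights, on dependent tuples; the law `p^{⊗s}` of
`s` i.i.d. samples is the case of the constant family `fun _ : Fin s => p`. -/
noncomputable def piWeight {ι : Type*} [Fintype ι] {X : ι → Type*} (p : ∀ i, X i → ℝ) :
    (∀ i, X i) → ℝ :=
  fun x => ∏ i, p i (x i)

section TotalVariation

variable {X : Type*} [Fintype X] {p q : X → ℝ}

lemma tvOn_self (p : X → ℝ) : tvOn p p = 0 := by
  simp [tvOn]

theorem tvOn_sq_le_one_sub_bhattacharyya_sq (hp : p ∈ stdSimplex ℝ X) (hq : q ∈ stdSimplex ℝ X) :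
    tvOn p q ^ 2 ≤ 1 - bhattacharyya p q ^ 2 := by
  have sqrt_sq x : √(p x * q x) ^ 2 = p x * q x := Real.sq_sqrt (mul_nonneg (hp.1 x) (hq.1 x))
  have two_sqrt_le x : 2 * √(p x * q x) ≤ p x + q x :=
    abs_le_of_sq_le_sq' (by linarith [sqrt_sq x, sq_nonneg (p x - q x)])
      (add_nonneg (hp.1 x) (hq.1 x)) |>.2
  -- The two factors come from `(p - q)² = (p + q - 2√(pq)) (p + q + 2√(pq))`.
  have cauchy_schwarz :
      (∑ x, |p x - q x|) ^ 2 ≤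
        (∑ x, (p x + q x - 2 * √(p x * q x))) * ∑ x, (p x + q x + 2 * √(p x * q x)) := by
    refine Finset.sum_sq_le_sum_mul_sum_of_sq_le_mul _ (fun x _ => sub_nonneg.2 (two_sqrt_le x))
      (fun x _ => add_nonneg (add_nonneg (hp.1 x) (hq.1 x)) (by positivity)) fun x _ => ?_
    rw [sq_abs]
    linarith [sqrt_sq x]
  simp only [Finset.sum_sub_distrib, Finset.sum_add_distrib, ← Finset.mul_sum, hp.2, hq.2]
    at cauchy_schwarz
  unfold tvOn bhattacharyya
  linarith

end TotalVariation

lemma one_sub_sum_le_prod_one_sub {ι R : Type*} [CommRing R] [PartialOrder R] [IsOrderedRing R]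
    (s : Finset ι) {f : ι → R} (hf₀ : ∀ i ∈ s, 0 ≤ f i) (hf₁ : ∀ i ∈ s, f i ≤ 1) :
    1 - ∑ i ∈ s, f i ≤ ∏ i ∈ s, (1 - f i) := by
  induction s using Finset.cons_induction with
  | empty => simp
  | cons a s ha ih =>
    simp only [Finset.forall_mem_cons] at hf₀ hf₁
    rw [Finset.sum_cons, Finset.prod_cons]
    calc 1 - (f a + ∑ i ∈ s, f i)
      _ ≤ 1 - (f a + ∑ i ∈ s, f i) + f a * ∑ i ∈ s, f i :=
        le_add_of_nonneg_right (mul_nonneg hf₀.1 (Finset.sum_nonneg hf₀.2))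
      _ = (1 - f a) * (1 - ∑ i ∈ s, f i) := by ring
      _ ≤ (1 - f a) * ∏ i ∈ s, (1 - f i) :=
        mul_le_mul_of_nonneg_left (ih hf₀.2 hf₁.2) (sub_nonneg.2 hf₁.1)

section Product

variable {ι : Type*} [Fintype ι] [DecidableEq ι] {X : ι → Type*} [∀ i, Fintype (X i)]
  {p q : ∀ i, X i → ℝ}

lemma piWeight_mem_stdSimplex (hp : ∀ i, p i ∈ stdSimplex ℝ (X i)) :
    piWeight p ∈ stdSimplex ℝ (∀ i, X i) := by
  refine ⟨fun x => Finset.prod_nonneg fun i _ => (hp i).1 (x i), ?_⟩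
  simp only [piWeight, ← Fintype.prod_sum, (hp _).2, Finset.prod_const_one]

lemma bhattacharyya_piWeight (hp : ∀ i x, 0 ≤ p i x) (hq : ∀ i x, 0 ≤ q i x) :
    bhattacharyya (piWeight p) (piWeight q) = ∏ i, bhattacharyya (p i) (q i) := by
  simp only [bhattacharyya, piWeight, Fintype.prod_sum, ← Finset.prod_mul_distrib]
  exact Finset.sum_congr rfl fun x _ =>
    Real.sqrt_prod _ fun i _ => mul_nonneg (hp i (x i)) (hq i (x i))

theorem tvOn_piWeight_sq_le_sum (hp : ∀ i, p i ∈ stdSimplex ℝ (X i))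
    (hq : ∀ i, q i ∈ stdSimplex ℝ (X i)) :
    tvOn (piWeight p) (piWeight q) ^ 2 ≤ ∑ i, (1 - bhattacharyya (p i) (q i) ^ 2) := by
  have defect_nonneg i : 0 ≤ 1 - bhattacharyya (p i) (q i) ^ 2 :=
    (sq_nonneg _).trans (tvOn_sq_le_one_sub_bhattacharyya_sq (hp i) (hq i))
  have weierstrass := one_sub_sum_le_prod_one_sub Finset.univ (fun i _ => defect_nonneg i)
    fun i _ => sub_le_self 1 (sq_nonneg (bhattacharyya (p i) (q i)))
  calc tvOn (piWeight p) (piWeight q) ^ 2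
    _ ≤ 1 - bhattacharyya (piWeight p) (piWeight q) ^ 2 :=
      tvOn_sq_le_one_sub_bhattacharyya_sq (piWeight_mem_stdSimplex hp) (piWeight_mem_stdSimplex hq)
    _ = 1 - ∏ i, bhattacharyya (p i) (q i) ^ 2 := by
      rw [bhattacharyya_piWeight (fun i => (hp i).1) (fun i => (hq i).1), Finset.prod_pow]
    _ ≤ ∑ i, (1 - bhattacharyya (p i) (q i) ^ 2) := by
      simp only [sub_sub_cancel] at weierstrass
      linarith

end Product

lemma sum_fin_two_mul_ite_odd {M : Type*} [AddCommMonoid M] (m : ℕ) (a b : M) :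
    ∑ i : Fin (2 * m), (if i.val % 2 = 1 then a else b) = m • (a + b) := by
  rw [Fin.sum_univ_eq_sum_range (fun i => if i % 2 = 1 then a else b)]
  induction m with
  | zero => simp
  | succ k ih =>
    rw [Nat.mul_succ, Finset.sum_range_succ, Finset.sum_range_succ, ih, succ_nsmul,
      if_neg (by omega), if_pos (by omega), add_assoc, add_comm b]

section Diamond

variable {m : ℕ} {β : ℝ}

lemma pdiamond_zero (m : ℕ) : pdiamond m 0 = fun _ => 1 / (2 * m : ℝ) := by
  ext i
  simp [pdiamond]

lemma pdiamond_mem_stdSimplex (hm : m ≠ 0) (hβ : |β| ≤ 1 / 2) :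
    pdiamond m β ∈ stdSimplex ℝ (Fin (2 * m)) := by
  obtain ⟨hβ₁, hβ₂⟩ := abs_le.1 hβ
  constructor
  · intro i
    unfold pdiamond
    split_ifs <;> exact div_nonneg (by linarith) (by positivity)
  · simp only [pdiamond, sum_fin_two_mul_ite_odd, nsmul_eq_mul]
    field_simp
    norm_num

lemma bhattacharyya_pdiamond_zero (hm : m ≠ 0) (β : ℝ) :
    bhattacharyya (pdiamond m 0) (pdiamond m β) = (√(1 + 2 * β) + √(1 - 2 * β)) / 2 := by
  have sqrt_scale (t : ℝ) : √(1 / (2 * m) * (t / (2 * m))) = √t / (2 * m) := by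
    rw [div_mul_div_comm, one_mul, Real.sqrt_div' _ (by positivity),
      Real.sqrt_mul_self (by positivity)]
  simp only [bhattacharyya, pdiamond_zero]
  simp only [pdiamond, mul_ite, apply_ite Real.sqrt, sqrt_scale, sum_fin_two_mul_ite_odd,
    nsmul_eq_mul]
  field_simp

lemma one_sub_bhattacharyya_pdiamond_zero_sq_le (hm : m ≠ 0) (hβ : |β| ≤ 1 / 2) :
    1 - bhattacharyya (pdiamond m 0) (pdiamond m β) ^ 2 ≤ 2 * β ^ 2 := by
  obtain ⟨hβ₁, hβ₂⟩ := abs_le.1 hβ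
  have sq_sqrt_add : √(1 + 2 * β) ^ 2 = 1 + 2 * β := Real.sq_sqrt (by linarith)
  have sq_sqrt_sub : √(1 - 2 * β) ^ 2 = 1 - 2 * β := Real.sq_sqrt (by linarith)
  have le_cross : (1 + 2 * β) * (1 - 2 * β) ≤ √(1 + 2 * β) * √(1 - 2 * β) := by
    rw [← Real.sqrt_mul (by linarith), Real.le_sqrt_self_iff]
    linarith [sq_nonneg β]
  rw [bhattacharyya_pdiamond_zero hm]
  linarith

end Diamond

theorem stmt5_general (m : ℕ) {β : ℝ} (hβ : |β| ≤ 1 / 2) (s : ℕ) :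
    tvOn (fun _x : Fin s → Fin (2 * m) => ∏ _j : Fin s, (1 / (2 * m : ℝ)))
         (fun x : Fin s → Fin (2 * m) => ∏ j, pdiamond m β (x j))
      ≤ √(2 * s) * |β| := by
  rcases eq_or_ne m 0 with rfl | hm
  · have weights_eq : (fun _x : Fin s → Fin (2 * 0) => ∏ _j : Fin s, (1 / (2 * (0 : ℕ) : ℝ))) =
        fun x => ∏ j, pdiamond 0 β (x j) :=
      funext fun x => Finset.prod_congr rfl fun j _ => (x j).elim0
    rw [weights_eq, tvOn_self]
    positivity
  have uniform_mem := pdiamond_mem_stdSimplex (β := 0) hm (by norm_num)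
  have tv_sq_le := tvOn_piWeight_sq_le_sum (fun _ : Fin s => uniform_mem)
    (fun _ : Fin s => pdiamond_mem_stdSimplex hm hβ)
  rw [← Real.sqrt_sq_eq_abs, ← Real.sqrt_mul (by positivity)]
  refine Real.le_sqrt_of_sq_le ?_
  calc _ = tvOn (piWeight fun _ : Fin s => pdiamond m 0) (piWeight fun _ => pdiamond m β) ^ 2 := by
        rw [pdiamond_zero]; rfl
    _ ≤ ∑ _j : Fin s, (1 - bhattacharyya (pdiamond m 0) (pdiamond m β) ^ 2) := tv_sq_le
    _ ≤ ∑ _j : Fin s, 2 * β ^ 2 :=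
      Finset.sum_le_sum fun _ _ => one_sub_bhattacharyya_pdiamond_zero_sq_le hm hβ
    _ = 2 * s * β ^ 2 := by
      rw [Finset.sum_const, Finset.card_univ, Fintype.card_fin, nsmul_eq_mul]
      ring

/-- for even `n = 2m` and `β ∈ [0, 0.4]`, for every positive `s`,
`tv(U_n^{⊗s} − (p^⋄)^{⊗s}) ≤ √(2s)·β`. -/
theorem stmt5 (m : ℕ) (β : ℝ) (hβ : β ∈ Set.Icc (0:ℝ) 0.4) (s : ℕ) (hs : 0 < s) :
    tvOn (fun _x : Fin s → Fin (2*m) => ∏ _j : Fin s, (1 / (2*m : ℝ)))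
         (fun x : Fin s → Fin (2*m) => ∏ j, pdiamond m β (x j))
      ≤ Real.sqrt (2*s) * β := by
  have abs_le_half : |β| ≤ 1 / 2 := abs_le.2 ⟨by linarith [hβ.1], by linarith [hβ.2]⟩
  simpa only [abs_of_nonneg hβ.1] using stmt5_general m abs_le_half s
end

section
/- Let p and p̂ be probability distributions on [n] with tv(p − p̂) ≤ α, let s_f > 0, and let ν ∈ (0,1]. Draw N ∼ Poisson(s_f), then draw N i.i.d. samples from p, and let f_i be the number of occurrences of element i among these samples. Define m_i := ⌊p̂_i/ν⌋ + f_i + 1 for each i ∈ [n]. Then E[Σ_{i=1}^n p_i²/m_i] ≤ 2α/s_f + 4ν, and moreover E[Σ_{i=1}^n m_i] ≤ n + 1/ν + s_f, where both expectations are over the randomness of the samples from p. -/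
open Finset

/-- `p` is a probability distribution on `Fin n`. -/
def IsDist {n : ℕ} (p : Fin n → ℝ) : Prop :=
  (∀ i, 0 ≤ p i) ∧ ∑ i, p i = 1

/-- Total variation distance `(1/2)·Σᵢ |pᵢ − qᵢ|`. -/
noncomputable def tv {n : ℕ} (p q : Fin n → ℝ) : ℝ :=
  (∑ i, |p i - q i|) / 2

/-- The Poisson probability mass function with mean `lam`. -/
noncomputable def poissonPdf (lam : ℝ) (k : ℕ) : ℝ :=
  Real.exp (-lam) * lam ^ k / (Nat.factorial k)

/-- Number of occurrences of the element `i` in the sample sequence `x`. -/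
def freq {n N : ℕ} (x : Fin N → Fin n) (i : Fin n) : ℕ :=
  (Finset.univ.filter (fun j => x j = i)).card

/-!
Split `pᵢ² ≤ pᵢ p̂ᵢ + pᵢ (pᵢ - p̂ᵢ)⁺`. In the first term the `⌊p̂ᵢ/ν⌋ + 1` buckets pay for the
factor `p̂ᵢ`, so it contributes at most `ν pᵢ`. In the second term only the `fᵢ + 1` buckets are
used: size biasing gives `(N + 1) pᵢ E_N[1/(fᵢ + 1)] = E_{N+1}[fᵢ/fᵢ] ≤ 1`, and the weights
`(pᵢ - p̂ᵢ)⁺` sum to the total variation distance. Averaging `1/(N + 1)` over `N ∼ Poisson(s)`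
gives at most `1/s`.
-/

section Poisson

variable {s : ℝ}

lemma poissonPdf_nonneg (hs : 0 ≤ s) (k : ℕ) : 0 ≤ poissonPdf s k := by
  unfold poissonPdf
  positivity

lemma poissonPdf_succ_mul (s : ℝ) (k : ℕ) :
    poissonPdf s (k + 1) * (k + 1) = s * poissonPdf s k := by
  simp only [poissonPdf, Nat.factorial_succ, Nat.cast_mul, Nat.cast_add_one, pow_succ]
  field_simp

lemma hasSum_poissonPdf (hs : 0 ≤ s) : HasSum (poissonPdf s) 1 :=
  ProbabilityTheory.hasSum_one_poissonMeasure ⟨s, hs⟩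

lemma hasSum_poissonPdf_mul_natCast (hs : 0 ≤ s) :
    HasSum (fun k : ℕ => poissonPdf s k * k) s := by
  rw [← hasSum_nat_add_iff' 1]
  simpa [poissonPdf_succ_mul] using (hasSum_poissonPdf hs).mul_left s

lemma hasSum_poissonPdf_mul_inv_add_one (hs : 0 < s) :
    HasSum (fun k : ℕ => poissonPdf s k * (k + 1 : ℝ)⁻¹) ((1 - Real.exp (-s)) / s) := by
  have htail : HasSum (fun k => poissonPdf s (k + 1)) (1 - Real.exp (-s)) := by
    simpa [poissonPdf] using (hasSum_nat_add_iff' 1).mpr (hasSum_poissonPdf hs.le)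
  refine (htail.div_const s).congr_fun fun k => ?_
  rw [← div_eq_mul_inv, div_eq_div_iff (by positivity) hs.ne', poissonPdf_succ_mul, mul_comm]

end Poisson

lemma sum_posPart_sub_eq_half_sum_abs {ι : Type*} [Fintype ι] {p q : ι → ℝ}
    (h : ∑ i, p i = ∑ i, q i) : ∑ i, (p i - q i)⁺ = (∑ i, |p i - q i|) / 2 := by
  have habs (i : ι) : |p i - q i| + (p i - q i) = 2 * (p i - q i)⁺ := by
    simpa using abs_add_eq_two_nsmul_posPart (p i - q i)
  have hsum : ∑ i, |p i - q i| + ∑ i, (p i - q i) = 2 * ∑ i, (p i - q i)⁺ := by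
    rw [← sum_add_distrib, mul_sum, sum_congr rfl fun i _ => habs i]
  rw [sum_sub_distrib, h] at hsum
  linarith

lemma sq_div_add_add_one_le {a q b f ν : ℝ} (ha : 0 ≤ a) (hb : 0 ≤ b) (hf : 0 ≤ f) (hν : 0 ≤ ν)
    (hq : q ≤ ν * (b + 1)) :
    a ^ 2 / (b + f + 1) ≤ ν * a + (a - q)⁺ * (a * (f + 1)⁻¹) := by
  have hfloor : a * q / (b + f + 1) ≤ ν * a := by
    rw [div_le_iff₀ (by positivity)]
    calc a * q ≤ a * (ν * (b + f + 1)) := by gcongr; exact hq.trans (by gcongr; linarith)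
      _ = ν * a * (b + f + 1) := by ring
  have hfreq : a * (a - q)⁺ / (b + f + 1) ≤ (a - q)⁺ * (a * (f + 1)⁻¹) := by
    calc a * (a - q)⁺ / (b + f + 1) ≤ a * (a - q)⁺ / (f + 1) := by gcongr; linarith
      _ = (a - q)⁺ * (a * (f + 1)⁻¹) := by ring
  calc a ^ 2 / (b + f + 1) = (a * q + a * (a - q)) / (b + f + 1) := by ring
    _ ≤ (a * q + a * (a - q)⁺) / (b + f + 1) := by gcongr; exact le_posPart _
    _ = a * q / (b + f + 1) + a * (a - q)⁺ / (b + f + 1) := add_div ..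
    _ ≤ ν * a + (a - q)⁺ * (a * (f + 1)⁻¹) := add_le_add hfloor hfreq

lemma card_filter_insertNth_self_eq {ι : Type*} [DecidableEq ι] {N : ℕ} (j : Fin (N + 1)) (i : ι)
    (x : Fin N → ι) :
    #{l | (j.insertNth i x : Fin (N + 1) → ι) l = i} = #{l | x l = i} + 1 := by
  rw [card_filter, card_filter, Fin.sum_univ_succAbove _ j]
  simp only [Fin.insertNth_apply_same, Fin.insertNth_apply_succAbove, if_true, add_comm]

section Sampling

variable {ι : Type*} [Fintype ι]

/-- The expectation of the statistic `g` of a sequence of `N` i.i.d. samples from the distribution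
with weights `p`, as a finite sum over all sample sequences. -/
def iidExpect (p : ι → ℝ) (N : ℕ) (g : (Fin N → ι) → ℝ) : ℝ :=
  ∑ x : Fin N → ι, (∏ j, p (x j)) * g x

/-- The expectation of the statistic `g` of a sequence of `N ∼ Poisson(s)` i.i.d. samples from the
distribution with weights `p`. As a `tsum` it is `0` if the series over `N` does not converge. -/
noncomputable def poissonizedExpect (s : ℝ) (p : ι → ℝ) (g : ∀ N, (Fin N → ι) → ℝ) : ℝ :=
  ∑' N, poissonPdf s N * iidExpect p N (g N)

variable {p q b : ι → ℝ} {N : ℕ} {s ν : ℝ}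

lemma iidExpect_add (p : ι → ℝ) (g h : (Fin N → ι) → ℝ) :
    iidExpect p N (fun x => g x + h x) = iidExpect p N g + iidExpect p N h := by
  simp only [iidExpect, mul_add, sum_add_distrib]

lemma iidExpect_const_mul (p : ι → ℝ) (c : ℝ) (g : (Fin N → ι) → ℝ) :
    iidExpect p N (fun x => c * g x) = c * iidExpect p N g := by
  simp only [iidExpect, mul_sum, mul_left_comm]

lemma iidExpect_sum {κ : Type*} (p : ι → ℝ) (t : Finset κ) (g : κ → (Fin N → ι) → ℝ) :
    iidExpect p N (fun x => ∑ k ∈ t, g k x) = ∑ k ∈ t, iidExpect p N (g k) := by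
  simp only [iidExpect, mul_sum]
  exact sum_comm

lemma iidExpect_const (hp : ∑ i, p i = 1) (c : ℝ) : iidExpect p N (fun _ => c) = c := by
  rw [iidExpect, ← sum_mul, ← Fintype.sum_pow, hp, one_pow, one_mul]

lemma iidExpect_mono (hp : ∀ i, 0 ≤ p i) {g h : (Fin N → ι) → ℝ} (hgh : ∀ x, g x ≤ h x) :
    iidExpect p N g ≤ iidExpect p N h :=
  sum_le_sum fun x _ => mul_le_mul_of_nonneg_left (hgh x) (prod_nonneg fun _ _ => hp _)

lemma iidExpect_nonneg (hp : ∀ i, 0 ≤ p i) {g : (Fin N → ι) → ℝ} (hg : ∀ x, 0 ≤ g x) :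
    0 ≤ iidExpect p N g :=
  sum_nonneg fun x _ => mul_nonneg (prod_nonneg fun _ _ => hp _) (hg x)

lemma iidExpect_succ (p : ι → ℝ) (j : Fin (N + 1)) (g : (Fin (N + 1) → ι) → ℝ) :
    iidExpect p (N + 1) g = ∑ k, p k * iidExpect p N (fun x => g (j.insertNth k x)) := by
  rw [iidExpect, ← (Fin.insertNthEquiv (fun _ => ι) j).sum_comp, Fintype.sum_prod_type]
  simp only [iidExpect, Fin.insertNthEquiv, Equiv.coe_fn_mk, Fin.prod_univ_succAbove _ j,
    Fin.insertNth_apply_same, Fin.insertNth_apply_succAbove, mul_assoc, mul_sum]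

lemma poissonizedExpect_le_of_hasSum {g : ∀ N, (Fin N → ι) → ℝ} {c : ℕ → ℝ} {C : ℝ} (hs : 0 ≤ s)
    (hg : ∀ N, 0 ≤ iidExpect p N (g N)) (hgc : ∀ N, iidExpect p N (g N) ≤ c N)
    (hc : HasSum (fun N => poissonPdf s N * c N) C) : poissonizedExpect s p g ≤ C := by
  have hle (N : ℕ) : poissonPdf s N * iidExpect p N (g N) ≤ poissonPdf s N * c N :=
    mul_le_mul_of_nonneg_left (hgc N) (poissonPdf_nonneg hs N)
  have hsummable := hc.summable.of_nonneg_of_le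
    (fun N => mul_nonneg (poissonPdf_nonneg hs N) (hg N)) hle
  exact hasSum_le hle hsummable.hasSum hc

variable [DecidableEq ι]

lemma iidExpect_ite_apply_eq (p : ι → ℝ) (i : ι) (j : Fin (N + 1)) (φ : ℕ → ℝ) :
    iidExpect p (N + 1) (fun y => if y j = i then φ #{l | y l = i} else 0) =
      p i * iidExpect p N (fun x => φ (#{l | x l = i} + 1)) := by
  rw [iidExpect_succ p j, sum_eq_single i]
  · simp only [Fin.insertNth_apply_same, if_true, card_filter_insertNth_self_eq]
  · intro k _ hk
    simp [iidExpect, hk]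
  · simp

lemma iidExpect_card_mul (p : ι → ℝ) (i : ι) (φ : ℕ → ℝ) :
    iidExpect p (N + 1) (fun y => #{l | y l = i} * φ #{l | y l = i}) =
      (N + 1) * (p i * iidExpect p N (fun x => φ (#{l | x l = i} + 1))) := by
  have hcount (y : Fin (N + 1) → ι) : (#{l | y l = i} : ℝ) * φ #{l | y l = i} =
      ∑ j, if y j = i then φ #{l | y l = i} else 0 := by
    rw [← sum_filter, sum_const, nsmul_eq_mul]
  simp only [hcount, iidExpect_sum, iidExpect_ite_apply_eq, sum_const, card_univ,
    Fintype.card_fin, nsmul_eq_mul, Nat.cast_add_one]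

lemma mul_iidExpect_inv_card_add_one_le (hp : p ∈ stdSimplex ℝ ι) (i : ι) :
    p i * iidExpect p N (fun x => (#{l | x l = i} + 1 : ℝ)⁻¹) ≤ (N + 1 : ℝ)⁻¹ := by
  have hbias := iidExpect_card_mul (N := N) p i (fun k => (k : ℝ)⁻¹)
  have hle : iidExpect p (N + 1) (fun y => #{l | y l = i} * (#{l | y l = i} : ℝ)⁻¹) ≤ 1 :=
    (iidExpect_mono hp.1 fun _ => mul_inv_le_one).trans_eq (iidExpect_const hp.2 1)
  rw [hbias] at hle
  simpa only [Nat.cast_add_one, one_div] using (le_div_iff₀' (by positivity)).mpr hle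

lemma iidExpect_sum_sq_div_le (hp : p ∈ stdSimplex ℝ ι) (hb : ∀ i, 0 ≤ b i) (hν : 0 ≤ ν)
    (hq : ∀ i, q i ≤ ν * (b i + 1)) :
    iidExpect p N (fun x => ∑ i, p i ^ 2 / (b i + #{l | x l = i} + 1)) ≤
      ν + (∑ i, (p i - q i)⁺) * (N + 1 : ℝ)⁻¹ := by
  have hterm (i : ι) : iidExpect p N (fun x => p i ^ 2 / (b i + #{l | x l = i} + 1)) ≤
      ν * p i + (p i - q i)⁺ * (N + 1 : ℝ)⁻¹ := by
    calc _ ≤ iidExpect p N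
          (fun x => ν * p i + (p i - q i)⁺ * (p i * (#{l | x l = i} + 1 : ℝ)⁻¹)) :=
          iidExpect_mono hp.1 fun x =>
            sq_div_add_add_one_le (hp.1 i) (hb i) (Nat.cast_nonneg _) hν (hq i)
      _ = ν * p i + (p i - q i)⁺ * (p i * iidExpect p N (fun x => (#{l | x l = i} + 1 : ℝ)⁻¹)) := by
          rw [iidExpect_add, iidExpect_const hp.2, iidExpect_const_mul, iidExpect_const_mul]
      _ ≤ ν * p i + (p i - q i)⁺ * (N + 1 : ℝ)⁻¹ := by
          gcongr
          exact mul_iidExpect_inv_card_add_one_le hp i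
  calc _ = ∑ i, iidExpect p N (fun x => p i ^ 2 / (b i + #{l | x l = i} + 1)) :=
        iidExpect_sum ..
    _ ≤ ∑ i, (ν * p i + (p i - q i)⁺ * (N + 1 : ℝ)⁻¹) := sum_le_sum fun i _ => hterm i
    _ = ν + (∑ i, (p i - q i)⁺) * (N + 1 : ℝ)⁻¹ := by
        rw [sum_add_distrib, ← mul_sum, ← sum_mul, hp.2, mul_one]

lemma poissonizedExpect_sum_sq_div_le (hp : p ∈ stdSimplex ℝ ι) (hb : ∀ i, 0 ≤ b i) (hν : 0 ≤ ν)
    (hq : ∀ i, q i ≤ ν * (b i + 1)) (hs : 0 < s) :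
    poissonizedExpect s p (fun _ x => ∑ i, p i ^ 2 / (b i + #{l | x l = i} + 1)) ≤
      (∑ i, (p i - q i)⁺) / s + ν := by
  set D := ∑ i, (p i - q i)⁺
  have hsum : HasSum (fun N : ℕ => poissonPdf s N * (ν + D * (N + 1 : ℝ)⁻¹))
      (ν + D * ((1 - Real.exp (-s)) / s)) := by
    simpa only [one_mul, mul_add, mul_left_comm D] using
      ((hasSum_poissonPdf hs.le).mul_right ν).add
        ((hasSum_poissonPdf_mul_inv_add_one hs).mul_left D)
  have hnonneg (i : ι) (k : ℕ) : 0 ≤ p i ^ 2 / (b i + k + 1) := by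
    have := hb i
    positivity
  calc _ ≤ ν + D * ((1 - Real.exp (-s)) / s) :=
        poissonizedExpect_le_of_hasSum hs.le
          (fun _ => iidExpect_nonneg hp.1 fun _ => sum_nonneg fun i _ => hnonneg i _)
          (fun _ => iidExpect_sum_sq_div_le hp hb hν hq) hsum
    _ ≤ ν + D * (1 / s) := by
        gcongr
        exact sub_le_self _ (Real.exp_pos _).le
    _ = D / s + ν := by ring

lemma sum_card_filter_eq (x : Fin N → ι) : ∑ i, #{l | x l = i} = N := by
  simpa using (card_eq_sum_card_fiberwise (f := x) (s := univ) (t := univ) (by simp)).symm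

lemma poissonizedExpect_sum_add_card_add_one (hp : ∑ i, p i = 1) (b : ι → ℝ) (hs : 0 ≤ s) :
    poissonizedExpect s p (fun _ x => ∑ i, (b i + #{l | x l = i} + 1)) =
      Fintype.card ι + ∑ i, b i + s := by
  have hcount (N : ℕ) (x : Fin N → ι) :
      ∑ i, (b i + #{l | x l = i} + 1) = Fintype.card ι + ∑ i, b i + N := by
    rw [sum_add_distrib, sum_add_distrib, ← Nat.cast_sum, sum_card_filter_eq]
    simp only [sum_const, card_univ, nsmul_eq_mul, mul_one]
    ring
  simp only [poissonizedExpect, hcount, iidExpect_const hp, mul_add _ _ (Nat.cast _)]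
  simpa using (((hasSum_poissonPdf hs).mul_right (Fintype.card ι + ∑ i, b i)).add
    (hasSum_poissonPdf_mul_natCast hs)).tsum_eq

theorem stmt10_general (hp : p ∈ stdSimplex ℝ ι) (hq : q ∈ stdSimplex ℝ ι) (hs : 0 < s)
    (hν : 0 < ν) :
    poissonizedExpect s p (fun _ x => ∑ i, p i ^ 2 / ((⌊q i / ν⌋ : ℝ) + #{l | x l = i} + 1)) ≤
        (∑ i, |p i - q i|) / 2 / s + ν ∧
      poissonizedExpect s p (fun _ x => ∑ i, ((⌊q i / ν⌋ : ℝ) + #{l | x l = i} + 1)) ≤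
        Fintype.card ι + 1 / ν + s := by
  constructor
  · have hfloor_nonneg (i : ι) : (0 : ℝ) ≤ ⌊q i / ν⌋ :=
      Int.cast_nonneg (Int.floor_nonneg.mpr (div_nonneg (hq.1 i) hν.le))
    have hq_le (i : ι) : q i ≤ ν * (⌊q i / ν⌋ + 1) :=
      (div_le_iff₀' hν).mp (Int.lt_floor_add_one _).le
    rw [← sum_posPart_sub_eq_half_sum_abs (hp.2.trans hq.2.symm)]
    exact poissonizedExpect_sum_sq_div_le hp hfloor_nonneg hν.le hq_le hs
  · have hfloor_sum : ∑ i, (⌊q i / ν⌋ : ℝ) ≤ 1 / ν := by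
      rw [← hq.2, sum_div]
      exact sum_le_sum fun i _ => Int.floor_le _
    rw [poissonizedExpect_sum_add_card_add_one hp.2 _ hs.le]
    gcongr

end Sampling

/-- augmented flattening: let `tv(p − phat) ≤ α`, `sf > 0` and
`ν ∈ (0,1]`.  Draw `N ∼ Poisson(sf)`, then `N` i.i.d. samples from `p`, let `fᵢ`
be the frequency of `i`, and set `mᵢ := ⌊phatᵢ/ν⌋ + fᵢ + 1`.  Then
`E[Σᵢ pᵢ²/mᵢ] ≤ 2α/sf + 4ν` and `E[Σᵢ mᵢ] ≤ n + 1/ν + sf`, where the expectation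
(written out as a sum over `N` and over all sample sequences) is over the
randomness of the samples. -/
theorem stmt10 (n : ℕ) (p phat : Fin n → ℝ) (hp : IsDist p) (hphat : IsDist phat)
    (α sf ν : ℝ) (hα : tv p phat ≤ α) (hsf : 0 < sf) (hν : ν ∈ Set.Ioc (0:ℝ) 1) :
    (∑' N : ℕ, poissonPdf sf N * ∑ x : Fin N → Fin n, (∏ j, p (x j)) *
        ∑ i, (p i) ^ 2 / ((⌊phat i / ν⌋ : ℝ) + (freq x i : ℝ) + 1))
      ≤ 2 * α / sf + 4 * ν ∧
    (∑' N : ℕ, poissonPdf sf N * ∑ x : Fin N → Fin n, (∏ j, p (x j)) *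
        ∑ i, ((⌊phat i / ν⌋ : ℝ) + (freq x i : ℝ) + 1))
      ≤ (n : ℝ) + 1 / ν + sf := by
  obtain ⟨hsq, hcard⟩ := stmt10_general hp hphat hsf hν.1
  have htv : 0 ≤ tv p phat := div_nonneg (sum_nonneg fun _ _ => abs_nonneg _) zero_le_two
  refine ⟨hsq.trans (add_le_add ?_ (by linarith [hν.1])), by rwa [Fintype.card_fin] at hcard⟩
  exact div_le_div_of_nonneg_right (show tv p phat ≤ 2 * α by linarith) hsf.le
end

section
/- Let p = (p_1,...,p_n) be a probability distribution on [n], let p̂_1,...,p̂_n be positive reals, and let v ∈ (0,1]. Define m_i := ⌊p̂_i/v⌋ + 1 for each i ∈ [n]. Then Σ_{i=1}^n p_i²/m_i ≤ v·Σ_{i=1}^n p_i²/p̂_i, and Σ_{i=1}^n m_i ≤ n + (1/v)·Σ_{i=1}^n p̂_i. -/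
open Finset

section FloorSums

variable {ι K : Type*} [Field K] [LinearOrder K] [IsStrictOrderedRing K] [FloorRing K]

theorem div_floor_div_add_one_le {a x v : K} (ha : 0 ≤ a) (hx : 0 < x) (hv : 0 < v) :
    a / ((⌊x / v⌋ : K) + 1) ≤ v * (a / x) :=
  calc
    a / ((⌊x / v⌋ : K) + 1) ≤ a / (x / v) :=
      div_le_div_of_nonneg_left ha (div_pos hx hv) (Int.lt_floor_add_one _).le
    _ = v * (a / x) := by rw [div_div_eq_mul_div, mul_comm, mul_div_assoc]

theorem sum_div_floor_div_add_one_le (s : Finset ι) {a x : ι → K} {v : K}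
    (ha : ∀ i ∈ s, 0 ≤ a i) (hx : ∀ i ∈ s, 0 < x i) (hv : 0 < v) :
    ∑ i ∈ s, a i / ((⌊x i / v⌋ : K) + 1) ≤ v * ∑ i ∈ s, a i / x i := by
  rw [mul_sum]
  exact sum_le_sum fun i hi ↦ div_floor_div_add_one_le (ha i hi) (hx i hi) hv

theorem sum_floor_div_add_one_le (s : Finset ι) (x : ι → K) (v : K) :
    ∑ i ∈ s, ((⌊x i / v⌋ : K) + 1) ≤ (#s : K) + 1 / v * ∑ i ∈ s, x i :=
  calc
    ∑ i ∈ s, ((⌊x i / v⌋ : K) + 1) ≤ ∑ i ∈ s, (x i / v + 1) := by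
      gcongr
      exact Int.floor_le _
    _ = (#s : K) + 1 / v * ∑ i ∈ s, x i := by
      rw [sum_add_distrib, ← sum_div, sum_const, nsmul_one, add_comm, one_div_mul_eq_div]

theorem stmt12_general (s : Finset ι) (p phat : ι → K) (hphat : ∀ i ∈ s, 0 < phat i)
    {v : K} (hv : 0 < v) :
    ∑ i ∈ s, p i ^ 2 / ((⌊phat i / v⌋ : K) + 1) ≤ v * ∑ i ∈ s, p i ^ 2 / phat i ∧
    ∑ i ∈ s, ((⌊phat i / v⌋ : K) + 1) ≤ (#s : K) + 1 / v * ∑ i ∈ s, phat i :=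
  ⟨sum_div_floor_div_add_one_le s (fun i _ ↦ sq_nonneg (p i)) hphat hv,
    sum_floor_div_add_one_le s phat v⟩

end FloorSums

/-- flattening with estimates: let `p` be a distribution on
`[n]`, `phatᵢ > 0` and `v ∈ (0,1]`, and set `mᵢ := ⌊phatᵢ/v⌋ + 1`.  Then
`Σᵢ pᵢ²/mᵢ ≤ v·Σᵢ pᵢ²/phatᵢ` and `Σᵢ mᵢ ≤ n + (1/v)·Σᵢ phatᵢ`. -/
theorem stmt12 (n : ℕ) (p phat : Fin n → ℝ) (hp : IsDist p)
    (hphat : ∀ i, 0 < phat i) (v : ℝ) (hv : v ∈ Set.Ioc (0:ℝ) 1) :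
    (∑ i, (p i) ^ 2 / ((⌊phat i / v⌋ : ℝ) + 1)) ≤ v * ∑ i, (p i) ^ 2 / phat i ∧
    (∑ i, ((⌊phat i / v⌋ : ℝ) + 1)) ≤ (n : ℝ) + (1 / v) * ∑ i, phat i := by
  simpa only [card_fin] using stmt12_general univ p phat (fun i _ ↦ hphat i) hv.1
end

section
/- Let p be a probability distribution on [n] and let s ≥ 160·√n be an integer. Let x_1,...,x_s be i.i.d. samples from p and let X := Σ_{1 ≤ i < j ≤ s} 1[x_i = x_j] be the number of colliding pairs. Then P( |X/C(s,2) − ‖p‖₂²| ≥ ‖p‖₂²/2 ) ≤ 0.1, where C(s,2) = s(s−1)/2 and ‖p‖₂² = Σ_{i=1}^n p_i². -/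
open Finset
open scoped Classical

/-- The number of colliding pairs among the samples `x₁, …, x_s`. -/
def collisions {n s : ℕ} (x : Fin s → Fin n) : ℕ :=
  (Finset.univ.filter (fun ij : Fin s × Fin s => ij.1 < ij.2 ∧ x ij.1 = x ij.2)).card

/-!
Chebyshev's inequality for the centred collision count, which is the second-order U-statistic of
the kernel `k a b = 1[a = b] - ‖p‖₂²`. The first projection of `k` is `a ↦ p a - ‖p‖₂²`, so the
variance is `s (s - 1) (s - 2) W + C(s,2) (‖p‖₂² - ‖p‖₂⁴)` with `W = ∑ a, p a (p a - ‖p‖₂²)²`.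
The constant `160` leaves no room for the estimate `W ≤ ∑ a, p a ^ 3 ≤ ‖p‖₂³ ≤ √n ‖p‖₂⁴`.
Replacing the mean `‖p‖₂²` of `p` in `W` by `1 / n` gives instead
`W ≤ ‖p‖₂ ∑ a, (p a - 1 / n)² = ‖p‖₂ (‖p‖₂² - 1 / n) ≤ √n ‖p‖₂⁴ / 2`, and the factor `1 / 2`
is enough.
-/

section SampleExpect

variable {α : Type*} [Fintype α] {s : ℕ}

/-- The expectation of `f x` for a sequence `x` of `s` independent samples, each with probability
mass function `p`. No condition on `p` is built in. -/
def sampleExpect (p : α → ℝ) (f : (Fin s → α) → ℝ) : ℝ :=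
  ∑ x : Fin s → α, (∏ j, p (x j)) * f x

variable (p : α → ℝ)

lemma sampleExpect_succ (f : (Fin (s + 1) → α) → ℝ) :
    sampleExpect p f = ∑ a, p a * sampleExpect p (fun x : Fin s → α ↦ f (Fin.cons a x)) := by
  simp only [sampleExpect, mul_sum]
  rw [← (Fin.consEquiv fun _ : Fin (s + 1) ↦ α).sum_comp, Fintype.sum_prod_type]
  simp [Fin.consEquiv, Fin.prod_univ_succ, mul_assoc]

lemma sampleExpect_add (f g : (Fin s → α) → ℝ) :
    sampleExpect p (fun x ↦ f x + g x) = sampleExpect p f + sampleExpect p g := by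
  simp only [sampleExpect, mul_add, sum_add_distrib]

lemma sampleExpect_const_mul (c : ℝ) (f : (Fin s → α) → ℝ) :
    sampleExpect p (fun x ↦ c * f x) = c * sampleExpect p f := by
  simp only [sampleExpect, mul_sum, mul_left_comm]

variable {p}

lemma sampleExpect_const (hp : ∑ a, p a = 1) (c : ℝ) :
    sampleExpect p (fun _ : Fin s → α ↦ c) = c := by
  rw [sampleExpect, ← sum_mul, ← Fintype.prod_sum fun (_ : Fin s) a ↦ p a]
  simp [hp]

lemma sum_ite_le_abs_le_sampleExpect_sq_div (hp : ∀ a, 0 ≤ p a) (f : (Fin s → α) → ℝ) {t : ℝ}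
    (ht : 0 < t) :
    ∑ x, (if t ≤ |f x| then ∏ j, p (x j) else 0) ≤ sampleExpect p (fun x ↦ f x ^ 2) / t ^ 2 := by
  rw [sampleExpect, sum_div]
  refine sum_le_sum fun x _ ↦ ?_
  have weight_nonneg : 0 ≤ ∏ j, p (x j) := prod_nonneg fun j _ ↦ hp (x j)
  split_ifs with hx
  · rw [le_div_iff₀ (by positivity), ← sq_abs (f x)]
    gcongr
  · positivity

lemma sampleExpect_sum (hp : ∑ a, p a = 1) (φ : α → ℝ) :
    sampleExpect p (fun x : Fin s → α ↦ ∑ j, φ (x j)) = s * ∑ a, p a * φ a := by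
  induction s with
  | zero => simp [sampleExpect]
  | succ s ih =>
    simp only [sampleExpect_succ, Fin.sum_univ_succ, Fin.cons_zero, Fin.cons_succ,
      sampleExpect_add, sampleExpect_const hp, ih, mul_add, sum_add_distrib, ← sum_mul, hp]
    push_cast
    ring

lemma sampleExpect_sum_mul_sum (hp : ∑ a, p a = 1) (φ ψ : α → ℝ) :
    sampleExpect p (fun x : Fin s → α ↦ (∑ j, φ (x j)) * ∑ j, ψ (x j)) =
      s * ∑ a, p a * (φ a * ψ a) + s * (s - 1) * ((∑ a, p a * φ a) * ∑ a, p a * ψ a) := by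
  induction s with
  | zero => simp [sampleExpect]
  | succ s ih =>
    have expand (a : α) (x : Fin s → α) :
        (φ a + ∑ j, φ (x j)) * (ψ a + ∑ j, ψ (x j)) =
          φ a * ψ a + φ a * ∑ j, ψ (x j) + ψ a * ∑ j, φ (x j) +
            (∑ j, φ (x j)) * ∑ j, ψ (x j) := by ring
    simp only [sampleExpect_succ, Fin.sum_univ_succ, Fin.cons_zero, Fin.cons_succ, expand,
      sampleExpect_add, sampleExpect_const_mul, sampleExpect_const hp, sampleExpect_sum hp, ih,
      mul_add, sum_add_distrib]
    simp only [← mul_assoc, ← sum_mul, hp]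
    push_cast
    ring

end SampleExpect

section PairSum

variable {α : Type*} {s : ℕ}

/-- The (unnormalised) second-order U-statistic of the sample `x` with kernel `k`. -/
def pairSum (k : α → α → ℝ) (x : Fin s → α) : ℝ :=
  ∑ i, ∑ j > i, k (x i) (x j)

lemma pairSum_cons (k : α → α → ℝ) (a : α) (x : Fin s → α) :
    pairSum k (Fin.cons a x : Fin (s + 1) → α) = ∑ j, k a (x j) + pairSum k x := by
  simp only [pairSum, Fin.sum_univ_succ, Fin.sum_Ioi_zero, Fin.sum_Ioi_succ, Fin.cons_zero,
    Fin.cons_succ]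

lemma pairSum_sub_const (k : α → α → ℝ) (c : ℝ) (x : Fin s → α) :
    pairSum (fun a b ↦ k a b - c) x = pairSum k x - s * (s - 1) / 2 * c := by
  induction s with
  | zero => simp [pairSum]
  | succ s ih =>
    rw [← Fin.cons_self_tail x, pairSum_cons, pairSum_cons, ih, sum_sub_distrib]
    simp only [sum_const, card_univ, Fintype.card_fin, nsmul_eq_mul]
    push_cast
    ring

variable [Fintype α]

/-- The first Hoeffding projection of the kernel `k`: the conditional expectation of `k a b` given
`a`, when `b` has probability mass function `p`. -/
def kernelProj (p : α → ℝ) (k : α → α → ℝ) (a : α) : ℝ :=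
  ∑ b, p b * k a b

variable {p : α → ℝ} {k : α → α → ℝ}

lemma kernelProj_apply (a : α) : kernelProj p k a = ∑ b, p b * k a b := rfl

lemma sum_mul_sum_mul_kernel (hk : ∀ a b, k a b = k b a) (φ : α → ℝ) :
    ∑ a, p a * ∑ b, p b * (k a b * φ b) = ∑ b, p b * (kernelProj p k b * φ b) := by
  simp only [kernelProj, sum_mul, mul_sum]
  rw [sum_comm]
  refine sum_congr rfl fun b _ ↦ sum_congr rfl fun a _ ↦ ?_
  rw [hk a b]
  ring

lemma sampleExpect_pairSum (hp : ∑ a, p a = 1) :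
    sampleExpect p (fun x : Fin s → α ↦ pairSum k x) =
      s * (s - 1) / 2 * ∑ a, p a * kernelProj p k a := by
  induction s with
  | zero => simp [sampleExpect, pairSum]
  | succ s ih =>
    simp only [sampleExpect_succ, pairSum_cons, sampleExpect_add, sampleExpect_sum hp, ih,
      ← kernelProj_apply, mul_add, sum_add_distrib, ← sum_mul, hp, mul_left_comm _ (s : ℝ),
      ← mul_sum]
    push_cast
    ring

lemma sampleExpect_pairSum_mul_sum (hp : ∑ a, p a = 1) (hk : ∀ a b, k a b = k b a)
    (hcentred : ∑ a, p a * kernelProj p k a = 0) (φ : α → ℝ) :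
    sampleExpect p (fun x : Fin s → α ↦ pairSum k x * ∑ j, φ (x j)) =
      s * (s - 1) * ∑ a, p a * (kernelProj p k a * φ a) := by
  induction s with
  | zero => simp [sampleExpect, pairSum]
  | succ s ih =>
    have expand (a : α) (x : Fin s → α) :
        (∑ j, k a (x j) + pairSum k x) * (φ a + ∑ j, φ (x j)) =
          φ a * ∑ j, k a (x j) + (∑ j, k a (x j)) * ∑ j, φ (x j) + φ a * pairSum k x +
            pairSum k x * ∑ j, φ (x j) := by ring
    have step (a : α) :
        sampleExpect p (fun x : Fin s → α ↦
            (∑ j, k a (x j) + pairSum k x) * (φ a + ∑ j, φ (x j))) =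
          s * (kernelProj p k a * φ a) + s * ∑ b, p b * (k a b * φ b) +
            s * (s - 1) * (∑ b, p b * φ b) * kernelProj p k a +
            s * (s - 1) * ∑ b, p b * (kernelProj p k b * φ b) := by
      simp only [expand, sampleExpect_add, sampleExpect_const_mul, sampleExpect_sum hp,
        sampleExpect_sum_mul_sum hp, sampleExpect_pairSum hp, hcentred, ih, ← kernelProj_apply]
      ring
    simp only [sampleExpect_succ, pairSum_cons, Fin.sum_univ_succ, Fin.cons_zero, Fin.cons_succ,
      step]
    simp only [mul_add, sum_add_distrib, mul_left_comm (p _) (s : ℝ),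
      mul_left_comm (p _) _ (kernelProj p k _), ← mul_sum, ← sum_mul, hp, hcentred,
      sum_mul_sum_mul_kernel hk]
    push_cast
    ring

theorem sampleExpect_pairSum_sq (hp : ∑ a, p a = 1) (hk : ∀ a b, k a b = k b a)
    (hcentred : ∑ a, p a * kernelProj p k a = 0) :
    sampleExpect p (fun x : Fin s → α ↦ pairSum k x ^ 2) =
      s * (s - 1) * (s - 2) * ∑ a, p a * kernelProj p k a ^ 2 +
        s * (s - 1) / 2 * ∑ a, p a * ∑ b, p b * k a b ^ 2 := by
  induction s with
  | zero => simp [sampleExpect, pairSum]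
  | succ s ih =>
    have expand (a : α) (x : Fin s → α) :
        (∑ j, k a (x j) + pairSum k x) ^ 2 =
          (∑ j, k a (x j)) * ∑ j, k a (x j) + 2 * (pairSum k x * ∑ j, k a (x j)) +
            pairSum k x ^ 2 := by ring
    have step (a : α) :
        sampleExpect p (fun x : Fin s → α ↦ (∑ j, k a (x j) + pairSum k x) ^ 2) =
          s * ∑ b, p b * k a b ^ 2 + s * (s - 1) * kernelProj p k a ^ 2 +
            2 * s * (s - 1) * ∑ b, p b * (k a b * kernelProj p k b) +
            sampleExpect p (fun x : Fin s → α ↦ pairSum k x ^ 2) := by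
      simp only [expand, sampleExpect_add, sampleExpect_const_mul, sampleExpect_sum_mul_sum hp,
        sampleExpect_pairSum_mul_sum hp hk hcentred, ← kernelProj_apply,
        mul_comm (kernelProj p k _) (k a _)]
      simp only [← sq]
      ring
    simp only [sampleExpect_succ, pairSum_cons, step, ih]
    simp only [mul_add, sum_add_distrib, mul_left_comm (p _) (_ * _) _,
      mul_left_comm (p _) (s : ℝ), ← mul_sum, ← sum_mul, hp, sum_mul_sum_mul_kernel hk, ← sq]
    push_cast
    ring

end PairSum

section CollisionKernel

variable {α : Type*} [Fintype α] {p : α → ℝ}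

lemma one_le_card_mul_sum_sq (hp : ∑ a, p a = 1) :
    1 ≤ (Fintype.card α : ℝ) * ∑ a, p a ^ 2 := by
  simpa [hp] using sq_sum_le_card_mul_sum_sq (s := univ) (f := p)

lemma sum_mul_sub_mean_sq_le (hp : ∑ a, p a = 1) (f : α → ℝ) (c : ℝ) :
    ∑ a, p a * (f a - ∑ b, p b * f b) ^ 2 ≤ ∑ a, p a * (f a - c) ^ 2 := by
  set m := ∑ b, p b * f b with hm
  have expand (a : α) : p a * (f a - c) ^ 2 =
      p a * (f a - m) ^ 2 + 2 * (m - c) * (p a * f a) + (c ^ 2 - m ^ 2) * p a := by ring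
  calc ∑ a, p a * (f a - m) ^ 2
      ≤ ∑ a, p a * (f a - m) ^ 2 + (m - c) ^ 2 := le_add_of_nonneg_right (sq_nonneg _)
    _ = ∑ a, p a * (f a - c) ^ 2 := by
        simp only [expand, sum_add_distrib, ← mul_sum, hp, ← hm]
        ring

lemma sum_sub_inv_card_sq (hp : ∑ a, p a = 1) :
    ∑ a, (p a - (Fintype.card α : ℝ)⁻¹) ^ 2 = ∑ a, p a ^ 2 - (Fintype.card α : ℝ)⁻¹ := by
  have card_ne_zero : (Fintype.card α : ℝ) ≠ 0 :=
    left_ne_zero_of_mul (zero_lt_one.trans_le (one_le_card_mul_sum_sq hp)).ne'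
  simp only [sub_sq, sum_add_distrib, sum_sub_distrib, ← sum_mul, ← mul_sum, hp, sum_const,
    card_univ, nsmul_eq_mul]
  field_simp
  ring

lemma le_sqrt_sum_sq (p : α → ℝ) (a : α) : p a ≤ √(∑ b, p b ^ 2) :=
  Real.le_sqrt_of_sq_le (single_le_sum (f := fun b ↦ p b ^ 2) (fun _ _ ↦ sq_nonneg _) (mem_univ a))

lemma sqrt_mul_sub_inv_le {n q : ℝ} (hn : 0 < n) (hnq : 1 ≤ n * q) :
    √q * (q - n⁻¹) ≤ √n * q ^ 2 / 2 := by
  have hq : 0 < q := pos_of_mul_pos_right (zero_lt_one.trans_le hnq) hn.le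
  obtain ⟨r, hr, rfl⟩ : ∃ r, 0 < r ∧ n = r ^ 2 := ⟨√n, by positivity, (Real.sq_sqrt hn.le).symm⟩
  obtain ⟨a, ha, rfl⟩ : ∃ a, 0 < a ∧ q = a ^ 2 := ⟨√q, by positivity, (Real.sq_sqrt hq.le).symm⟩
  have one_le : 1 ≤ r * a := by
    rwa [← mul_pow, one_le_sq_iff₀ (by positivity)] at hnq
  have am_gm : 2 * ((r * a) ^ 2 - 1) * (r * a) ≤ (r * a) ^ 4 := by
    have sq_sub_one_nonneg : 0 ≤ (r * a) ^ 2 - 1 := sub_nonneg.2 (one_le_pow₀ one_le)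
    calc 2 * ((r * a) ^ 2 - 1) * (r * a) = ((r * a) ^ 2 - 1) * (2 * (r * a) * 1) := by ring
      _ ≤ ((r * a) ^ 2 - 1) * ((r * a) ^ 2 + 1 ^ 2) :=
          mul_le_mul_of_nonneg_left (two_mul_le_add_sq (r * a) 1) sq_sub_one_nonneg
      _ ≤ (r * a) ^ 4 := by linarith
  rw [Real.sqrt_sq ha.le, Real.sqrt_sq hr.le]
  calc a * (a ^ 2 - (r ^ 2)⁻¹)
      = 2 * ((r * a) ^ 2 - 1) * (r * a) / (2 * r ^ 3) := by field_simp
    _ ≤ (r * a) ^ 4 / (2 * r ^ 3) := by gcongr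
    _ = r * (a ^ 2) ^ 2 / 2 := by field_simp

lemma sum_mul_sub_sum_sq_sq_le (hp : ∑ a, p a = 1) :
    ∑ a, p a * (p a - ∑ b, p b ^ 2) ^ 2 ≤ √(Fintype.card α) * (∑ a, p a ^ 2) ^ 2 / 2 := by
  have one_le := one_le_card_mul_sum_sq hp
  have card_pos : 0 < (Fintype.card α : ℝ) :=
    pos_of_mul_pos_left (zero_lt_one.trans_le one_le) (sum_nonneg fun a _ ↦ sq_nonneg (p a))
  set q := ∑ a, p a ^ 2
  set c := (Fintype.card α : ℝ)⁻¹
  calc ∑ a, p a * (p a - q) ^ 2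
      ≤ ∑ a, p a * (p a - c) ^ 2 := by simpa [q, sq] using sum_mul_sub_mean_sq_le hp p c
    _ ≤ ∑ a, √q * (p a - c) ^ 2 := by gcongr with a; exact le_sqrt_sum_sq p a
    _ = √q * (q - c) := by rw [← mul_sum, sum_sub_inv_card_sq hp]
    _ ≤ √(Fintype.card α) * q ^ 2 / 2 := sqrt_mul_sub_inv_le card_pos one_le

/-- The collision indicator `1[a = b]`, centred at its mean `∑ a, p a ^ 2` for independent `a` and
`b` with probability mass function `p`. -/
def centredCollision [DecidableEq α] (p : α → ℝ) (a b : α) : ℝ :=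
  (if a = b then 1 else 0) - ∑ c, p c ^ 2

variable [DecidableEq α]

lemma centredCollision_comm (a b : α) : centredCollision p a b = centredCollision p b a := by
  simp only [centredCollision, eq_comm]

lemma kernelProj_centredCollision (hp : ∑ a, p a = 1) (a : α) :
    kernelProj p (centredCollision p) a = p a - ∑ c, p c ^ 2 := by
  simp [kernelProj, centredCollision, mul_sub, ← sum_mul, hp]

lemma sum_mul_kernelProj_centredCollision (hp : ∑ a, p a = 1) :
    ∑ a, p a * kernelProj p (centredCollision p) a = 0 := by
  simp [kernelProj_centredCollision hp, mul_sub, ← sum_mul, hp, sq]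

lemma sum_mul_sum_mul_centredCollision_sq (hp : ∑ a, p a = 1) :
    ∑ a, p a * ∑ b, p b * centredCollision p a b ^ 2 =
      ∑ a, p a ^ 2 - (∑ a, p a ^ 2) ^ 2 := by
  set q := ∑ a, p a ^ 2 with hq
  have inner (a : α) : ∑ b, p b * centredCollision p a b ^ 2 = (1 - 2 * q) * p a + q ^ 2 := by
    have expand (b : α) : p b * centredCollision p a b ^ 2 =
        (1 - 2 * q) * (if a = b then p b else 0) + q ^ 2 * p b := by
      unfold centredCollision
      split_ifs <;> ring
    simp [expand, sum_add_distrib, ← mul_sum, hp]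
  simp only [inner, mul_add, mul_left_comm (p _), ← sq, sum_add_distrib, ← mul_sum, ← sum_mul, hp,
    ← hq]
  ring

lemma sampleExpect_pairSum_centredCollision_sq_le (hp : ∑ a, p a = 1) {s : ℕ} (hs : 2 ≤ s) :
    sampleExpect p (fun x : Fin s → α ↦ pairSum (centredCollision p) x ^ 2) ≤
      s * (s - 1) / 2 * ((s - 2) * √(Fintype.card α) * (∑ a, p a ^ 2) ^ 2 + ∑ a, p a ^ 2) := by
  have two_le : (2 : ℝ) ≤ s := mod_cast hs
  have pairs_nonneg : (0 : ℝ) ≤ s * (s - 1) / 2 := by nlinarith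
  have proj_le := sum_mul_sub_sum_sq_sq_le hp
  rw [sampleExpect_pairSum_sq hp centredCollision_comm (sum_mul_kernelProj_centredCollision hp),
    sum_mul_sum_mul_centredCollision_sq hp]
  simp only [kernelProj_centredCollision hp]
  set q := ∑ a, p a ^ 2
  set W := ∑ a, p a * (p a - q) ^ 2
  calc s * (s - 1) * (s - 2) * W + s * (s - 1) / 2 * (q - q ^ 2)
      = s * (s - 1) / 2 * ((s - 2) * (2 * W) + (q - q ^ 2)) := by ring
    _ ≤ s * (s - 1) / 2 * ((s - 2) * (2 * (√(Fintype.card α) * q ^ 2 / 2)) + q) := by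
        gcongr
        exact sub_le_self _ (sq_nonneg q)
    _ = s * (s - 1) / 2 * ((s - 2) * √(Fintype.card α) * q ^ 2 + q) := by ring

end CollisionKernel

section Collisions

variable {n s : ℕ}

lemma IsDist.pos {p : Fin n → ℝ} (hp : IsDist p) : 0 < n := by
  rcases n.eq_zero_or_pos with rfl | hn
  · simpa using hp.2
  · exact hn

lemma collisions_eq_pairSum (x : Fin s → Fin n) :
    (collisions x : ℝ) = pairSum (fun a b ↦ if a = b then 1 else 0) x := by
  rw [collisions, card_filter, Fintype.sum_prod_type, pairSum]
  push_cast
  refine sum_congr rfl fun i _ ↦ ?_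
  rw [← filter_lt_eq_Ioi, sum_filter]
  simp only [ite_and]

lemma pairSum_centredCollision (p : Fin n → ℝ) (x : Fin s → Fin n) :
    pairSum (centredCollision p) x = collisions x - s * (s - 1) / 2 * ∑ i, p i ^ 2 := by
  rw [collisions_eq_pairSum, ← pairSum_sub_const]
  rfl

lemma failure_bound_le_tenth {n s : ℝ} (hn : 1 ≤ n) (hs : 160 * √n ≤ s) :
    (2 * √n / s + 2 * n / (s * (s - 1))) / (1 / 2) ^ 2 ≤ 0.1 := by
  have one_le_sqrt : 1 ≤ √n := Real.one_le_sqrt.2 hn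
  have first_le : 2 * √n / s ≤ 1 / 80 := by
    rw [div_le_div_iff₀ (by linarith) (by norm_num)]
    linarith
  have second_le : 2 * n / (s * (s - 1)) ≤ 1 / 80 := by
    rw [div_le_div_iff₀ (by nlinarith) (by norm_num)]
    nlinarith [Real.sq_sqrt (zero_le_one.trans hn)]
  calc (2 * √n / s + 2 * n / (s * (s - 1))) / (1 / 2) ^ 2
      ≤ (1 / 80 + 1 / 80) / (1 / 2) ^ 2 := by gcongr
    _ = 0.1 := by norm_num

lemma two_le_of_mul_sqrt_le (hn : 0 < n) (hs : 160 * √n ≤ s) : 2 ≤ s := by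
  have one_le_sqrt : 1 ≤ √(n : ℝ) := Real.one_le_sqrt.2 (mod_cast hn)
  have : (2 : ℝ) ≤ s := by linarith
  exact_mod_cast this

lemma le_abs_div_sub_iff {c : ℝ} (hc : 0 < c) (t y m : ℝ) :
    t ≤ |y / c - m| ↔ c * t ≤ |y - c * m| := by
  have scale : y - c * m = c * (y / c - m) := by field_simp
  rw [scale, abs_mul, abs_of_pos hc, mul_le_mul_iff_right₀ hc]

theorem stmt13_general {p : Fin n → ℝ} (hp : IsDist p) (hs : 2 ≤ s) {ε : ℝ} (hε : 0 < ε) :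
    (∑ x : Fin s → Fin n,
        if ε * ∑ i, (p i) ^ 2 ≤
            |(collisions x : ℝ) / ((s : ℝ) * ((s : ℝ) - 1) / 2) - ∑ i, (p i) ^ 2|
        then (∏ j, p (x j)) else 0)
      ≤ (2 * √n / s + 2 * n / (s * (s - 1))) / ε ^ 2 := by
  obtain ⟨hp₀, hp₁⟩ := hp
  have two_le : (2 : ℝ) ≤ s := mod_cast hs
  have one_le : 1 ≤ n * ∑ i, p i ^ 2 := by simpa using one_le_card_mul_sum_sq hp₁
  have variance_le := sampleExpect_pairSum_centredCollision_sq_le hp₁ hs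
  rw [Fintype.card_fin] at variance_le
  have hq : 0 < ∑ i, p i ^ 2 :=
    pos_of_mul_pos_right (zero_lt_one.trans_le one_le) (Nat.cast_nonneg n)
  set q := ∑ i, p i ^ 2
  have pred_pos : (0 : ℝ) < s - 1 := by linarith
  set C : ℝ := s * (s - 1) / 2 with hC
  have C_pos : 0 < C := by positivity
  simp only [le_abs_div_sub_iff C_pos, C, q, ← pairSum_centredCollision]
  calc _ ≤ sampleExpect p (fun x : Fin s → Fin n ↦ pairSum (centredCollision p) x ^ 2) /
          (C * (ε * q)) ^ 2 := sum_ite_le_abs_le_sampleExpect_sq_div hp₀ _ (by positivity)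
    _ ≤ C * ((s - 1) * √n * q ^ 2 + q * (n * q)) / (C * (ε * q)) ^ 2 := by
        gcongr
        refine variance_le.trans ?_
        gcongr
        · norm_num
        · exact le_mul_of_one_le_right hq.le one_le
    _ = (2 * √n / s + 2 * n / (s * (s - 1))) / ε ^ 2 := by
        rw [hC]
        field_simp

end Collisions

/-- collision-based `ℓ₂²` estimation: for a distribution `p` on
`[n]` and an integer `s ≥ 160·√n`, drawing `s` i.i.d. samples `x` from `p` and
letting `X := collisions x`, the probability (written as a sum over all sample
sequences) that `|X/C(s,2) − ‖p‖₂²| ≥ ‖p‖₂²/2` is at most `0.1`. -/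
theorem stmt13 (n : ℕ) (p : Fin n → ℝ) (hp : IsDist p) (s : ℕ)
    (hs : 160 * Real.sqrt n ≤ (s : ℝ)) :
    (∑ x : Fin s → Fin n,
        if (∑ i, (p i) ^ 2) / 2 ≤
            |(collisions x : ℝ) / ((s : ℝ) * ((s : ℝ) - 1) / 2) - ∑ i, (p i) ^ 2|
        then (∏ j, p (x j)) else 0)
      ≤ 0.1 := by
  simpa only [one_div_mul_eq_div] using
    (stmt13_general hp (two_le_of_mul_sqrt_le hp.pos hs) one_half_pos).trans
      (failure_bound_le_tenth (mod_cast hp.pos) hs)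
end

section
/- Let δ ∈ (0, 1/2), let s_min > 0, let t be a positive integer, let i* ∈ {0,1,...,t}, and let f* > 0 satisfy 2^{i*−1}·s_min < f*. Let I be a random variable taking values in {0,1,...,t} such that P(I ≥ i) ≤ (δ/2)^{i − i*} for every i ≥ i*, and let S be a random variable satisfying S ≤ Σ_{j=0}^{I} 2^j·s_min almost surely. Then E[S] ≤ 6·f*. -/
open MeasureTheory Finset

/-!
Since `∑ j ≤ I, a j = ∑' j, a j * 1_{j ≤ I}`, the expected cost is `∑' j, a j * P(j ≤ I)`. For
`a j = 2 ^ j` the terms below `i*` contribute at most `2 ^ i*`, and from `i*` on the tail bound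
`(δ / 2) ^ k` beats the doubling, leaving the geometric series `2 ^ i* * ∑' k, δ ^ k`. The total
`2 ^ i* * (1 + 1 / (1 - δ))` is at most `3 * 2 ^ i*` for `δ ≤ 1 / 2`, and `2 ^ i* * smin < 2 * f*`.
-/

open scoped ENNReal

section Lintegral

variable {Ω : Type*} [MeasurableSpace Ω] {μ : Measure Ω}

theorem lintegral_sum_range_succ_eq_tsum {I : Ω → ℕ} (hI : AEMeasurable I μ) (a : ℕ → ℝ≥0∞) :
    ∫⁻ ω, ∑ j ∈ range (I ω + 1), a j ∂μ = ∑' j, a j * μ {ω | j ≤ I ω} := by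
  have null_meas (j : ℕ) : NullMeasurableSet {ω | j ≤ I ω} μ :=
    hI.nullMeasurable measurableSet_Ici
  have sum_eq_tsum (ω : Ω) : ∑ j ∈ range (I ω + 1), a j =
      ∑' j, {ω | j ≤ I ω}.indicator (fun _ ↦ a j) ω := by
    rw [sum_eq_tsum_indicator]
    simp [Set.indicator_apply]
  simp_rw [sum_eq_tsum]
  rw [lintegral_tsum fun j ↦ aemeasurable_const.indicator₀ (null_meas j)]
  simp_rw [lintegral_indicator_const₀ (null_meas _)]

theorem sum_range_two_pow_le (n : ℕ) : ∑ j ∈ range n, (2 : ℝ≥0∞) ^ j ≤ 2 ^ n := by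
  exact_mod_cast (Nat.geomSum_lt le_rfl fun _ ↦ mem_range.mp).le

theorem tsum_two_pow_mul_le {p : ℕ → ℝ≥0∞} {r : ℝ≥0∞} {n : ℕ} (hp : ∀ j < n, p j ≤ 1)
    (htail : ∀ k, p (k + n) ≤ r ^ k) :
    ∑' j, 2 ^ j * p j ≤ 2 ^ n * (1 + (1 - 2 * r)⁻¹) := by
  have head_le : ∑ j ∈ range n, 2 ^ j * p j ≤ 2 ^ n :=
    (sum_le_sum fun j hj ↦ mul_le_of_le_one_right' (hp j (mem_range.mp hj))).trans
      (sum_range_two_pow_le n)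
  have tail_le : ∑' k, 2 ^ (k + n) * p (k + n) ≤ 2 ^ n * (1 - 2 * r)⁻¹ := calc
    _ ≤ ∑' k, 2 ^ (k + n) * r ^ k := by gcongr with k; exact htail k
    _ = ∑' k, 2 ^ n * (2 * r) ^ k := by congr! 2 with k; ring
    _ = 2 ^ n * (1 - 2 * r)⁻¹ := by rw [ENNReal.tsum_mul_left, ENNReal.tsum_geometric]
  calc
    _ = ∑ j ∈ range n, 2 ^ j * p j + ∑' k, 2 ^ (k + n) * p (k + n) :=
      (ENNReal.summable.sum_add_tsum_nat_add').symm
    _ ≤ 2 ^ n + 2 ^ n * (1 - 2 * r)⁻¹ := add_le_add head_le tail_le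
    _ = 2 ^ n * (1 + (1 - 2 * r)⁻¹) := by ring

theorem lintegral_sum_two_pow_le [IsZeroOrProbabilityMeasure μ] {I : Ω → ℕ}
    (hI : AEMeasurable I μ) {r : ℝ≥0∞} {n : ℕ}
    (htail : ∀ i, n ≤ i → μ {ω | i ≤ I ω} ≤ r ^ (i - n)) :
    ∫⁻ ω, ∑ j ∈ range (I ω + 1), 2 ^ j ∂μ ≤ 2 ^ n * (1 + (1 - 2 * r)⁻¹) := by
  rw [lintegral_sum_range_succ_eq_tsum hI]
  exact tsum_two_pow_mul_le (fun _ _ ↦ prob_le_one)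
    fun k ↦ by simpa using htail (k + n) (Nat.le_add_left n k)

theorem integrable_max_zero_of_lintegral_ofReal_ne_top {f : Ω → ℝ}
    (hf : AEStronglyMeasurable f μ) (h : ∫⁻ ω, ENNReal.ofReal (f ω) ∂μ ≠ ∞) :
    Integrable (fun ω ↦ max (f ω) 0) μ := by
  have hmax : AEStronglyMeasurable (fun ω ↦ max (f ω) 0) μ := hf.sup aestronglyMeasurable_const
  refine (lintegral_ofReal_ne_top_iff_integrable hmax (ae_of_all _ fun _ ↦ le_max_right _ _)).mp ?_
  simpa using h

theorem integral_le_of_lintegral_ofReal_le {f : Ω → ℝ} {C : ℝ} (hC : 0 ≤ C)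
    (h : ∫⁻ ω, ENNReal.ofReal (f ω) ∂μ ≤ ENNReal.ofReal C) : ∫ ω, f ω ∂μ ≤ C := by
  by_cases hf : Integrable f μ
  · rw [integral_eq_lintegral_pos_part_sub_lintegral_neg_part hf]
    exact (sub_le_self _ ENNReal.toReal_nonneg).trans (ENNReal.toReal_le_of_le_ofReal hC h)
  · rwa [integral_undef hf]

theorem lintegral_ofReal_le_of_le_sum_two_pow [IsZeroOrProbabilityMeasure μ] {δ s : ℝ} {n : ℕ}
    (hδ₀ : 0 ≤ δ) (hδ₁ : δ < 1) (hs : 0 ≤ s) {I : Ω → ℕ} (hI : AEMeasurable I μ)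
    (htail : ∀ i, n ≤ i → μ.real {ω | i ≤ I ω} ≤ (δ / 2) ^ (i - n))
    {S : Ω → ℝ} (hS : ∀ᵐ ω ∂μ, S ω ≤ ∑ j ∈ range (I ω + 1), 2 ^ j * s) :
    ∫⁻ ω, ENNReal.ofReal (S ω) ∂μ ≤ ENNReal.ofReal (2 ^ n * s * (1 + (1 - δ)⁻¹)) := by
  have htail' (i : ℕ) (hi : n ≤ i) : μ {ω | i ≤ I ω} ≤ ENNReal.ofReal (δ / 2) ^ (i - n) := by
    rw [← ENNReal.ofReal_pow (by positivity)]
    exact (ENNReal.le_ofReal_iff_toReal_le (measure_ne_top _ _) (by positivity)).mpr (htail i hi)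
  have ofReal_sum (m : ℕ) : ENNReal.ofReal (∑ j ∈ range m, 2 ^ j * s) =
      ENNReal.ofReal s * ∑ j ∈ range m, 2 ^ j := by
    rw [← sum_mul, mul_comm, ENNReal.ofReal_mul hs, ENNReal.ofReal_sum_of_nonneg (by simp)]
    simp [ENNReal.ofReal_pow]
  have ratio : 1 - 2 * ENNReal.ofReal (δ / 2) = ENNReal.ofReal (1 - δ) := by
    rw [ENNReal.ofReal_sub _ hδ₀, ENNReal.ofReal_one, ← ENNReal.ofReal_ofNat 2,
      ← ENNReal.ofReal_mul zero_le_two, mul_div_cancel₀ δ two_ne_zero]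
  have hδ : 0 < 1 - δ := sub_pos.mpr hδ₁
  calc
    _ ≤ ∫⁻ ω, ENNReal.ofReal s * ∑ j ∈ range (I ω + 1), 2 ^ j ∂μ := by
      refine lintegral_mono_ae (hS.mono fun ω hω ↦ ?_)
      exact (ENNReal.ofReal_le_ofReal hω).trans_eq (ofReal_sum _)
    _ = ENNReal.ofReal s * ∫⁻ ω, ∑ j ∈ range (I ω + 1), 2 ^ j ∂μ :=
      lintegral_const_mul' _ _ ENNReal.ofReal_ne_top
    _ ≤ ENNReal.ofReal s * (2 ^ n * (1 + (1 - 2 * ENNReal.ofReal (δ / 2))⁻¹)) := by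
      gcongr
      exact lintegral_sum_two_pow_le hI htail'
    _ = ENNReal.ofReal (2 ^ n * s * (1 + (1 - δ)⁻¹)) := by
      rw [ratio, ← ENNReal.ofReal_inv_of_pos hδ, ENNReal.ofReal_mul (by positivity),
        ENNReal.ofReal_mul (by positivity), ENNReal.ofReal_add zero_le_one (by positivity)]
      simp [ENNReal.ofReal_pow, mul_left_comm, mul_assoc]

end Lintegral

theorem stmt14_general {Ω : Type*} [MeasurableSpace Ω] {μ : Measure Ω}
    [IsZeroOrProbabilityMeasure μ] {δ smin fstar : ℝ} {istar : ℕ}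
    (hδ : δ ∈ Set.Ico (0 : ℝ) 1) (hsmin : 0 ≤ smin)
    (hfstar : (2 : ℝ) ^ ((istar : ℤ) - 1) * smin ≤ fstar)
    {I : Ω → ℕ} (hI : AEMeasurable I μ)
    (hItail : ∀ i, istar ≤ i → μ.real {ω | i ≤ I ω} ≤ (δ / 2) ^ (i - istar))
    {S : Ω → ℝ} (hSmeas : AEStronglyMeasurable S μ)
    (hS : ∀ᵐ ω ∂μ, S ω ≤ ∑ j ∈ range (I ω + 1), 2 ^ j * smin) :
    Integrable (fun ω ↦ max (S ω) 0) μ ∧ ∫ ω, S ω ∂μ ≤ 2 * (1 + (1 - δ)⁻¹) * fstar := by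
  have hδ' : 0 < 1 - δ := sub_pos.mpr hδ.2
  have budget_le : 2 ^ istar * smin ≤ 2 * fstar := by
    rw [zpow_sub_one₀ two_ne_zero, zpow_natCast] at hfstar
    linarith
  have lintegral_le := lintegral_ofReal_le_of_le_sum_two_pow hδ.1 hδ.2 hsmin hI hItail hS
  refine ⟨integrable_max_zero_of_lintegral_ofReal_ne_top hSmeas
    (ne_top_of_le_ne_top ENNReal.ofReal_ne_top lintegral_le), ?_⟩
  calc
    _ ≤ 2 ^ istar * smin * (1 + (1 - δ)⁻¹) :=
      integral_le_of_lintegral_ofReal_le (by positivity) lintegral_le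
    _ ≤ 2 * fstar * (1 + (1 - δ)⁻¹) := by gcongr
    _ = 2 * (1 + (1 - δ)⁻¹) * fstar := by ring

/-- expected sample complexity of the doubling search: let
`δ ∈ (0,1/2)`, `smin > 0`, `t` a positive integer, `i* ∈ {0,…,t}`, and `f* > 0`
with `2^{i*−1}·smin < f*`.  If the random round index `I` takes values in
`{0,…,t}` and satisfies `P(I ≥ i) ≤ (δ/2)^{i−i*}` for all `i ≥ i*`, and the
random sample count `S` satisfies `S ≤ Σ_{j=0}^{I} 2^j·smin` almost surely, then
`E[S] ≤ 6·f*`. -/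
theorem stmt14 {Ω : Type*} [MeasurableSpace Ω] (μ : Measure Ω)
    [IsProbabilityMeasure μ]
    (δ smin fstar : ℝ) (t istar : ℕ) (ht : 0 < t)
    (hδ : δ ∈ Set.Ioo (0:ℝ) (1/2)) (hsmin : 0 < smin) (histar : istar ≤ t)
    (hfstar : (2:ℝ) ^ ((istar : ℤ) - 1) * smin < fstar)
    (I : Ω → ℕ) (hImeas : Measurable I) (hIt : ∀ ω, I ω ≤ t)
    (hItail : ∀ i : ℕ, istar ≤ i → (μ {ω | i ≤ I ω}).toReal ≤ (δ / 2) ^ (i - istar))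
    (S : Ω → ℝ) (hSmeas : Measurable S)
    (hS : ∀ᵐ ω ∂μ, S ω ≤ ∑ j ∈ Finset.range (I ω + 1), 2 ^ j * smin) :
    ∫ ω, S ω ∂μ ≤ 6 * fstar := by
  have hfstar_pos : 0 < fstar := hfstar.trans' (by positivity)
  have inv_le : (1 - δ)⁻¹ ≤ 2 := inv_le_of_inv_le₀ two_pos (by linarith [hδ.2])
  refine (stmt14_general ⟨hδ.1.le, by linarith [hδ.2]⟩ hsmin.le hfstar.le hImeas.aemeasurable
    hItail hSmeas.aestronglyMeasurable hS).2.trans ?_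
  gcongr
  linarith
end

section
/- For every x ∈ ℝ, Σ_{i=0}^∞ x^i/⌊i/2⌋! = (1+x)·e^{x²}. Moreover, for every x ∈ (0, 1.33], x² + x³ ≤ Σ_{i=2}^∞ x^i/⌊i/2⌋! < x² + x³ + 3x⁴. -/
/-!
Grouping the indices `2n` and `2n + 1`, which share the coefficient `1/n!`, turns the series into
`(1 + x) Σ (x²)ⁿ/n! = (1 + x) e^{x²}`; removing the terms `i = 0, 1` leaves `(1 + x) (e^{x²} - 1)`.
The lower bound is then `e^y ≥ 1 + y` at `y = x²`. For the upper bound, the third-order Taylor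
remainder gives `e^y - 1 - y ≤ 7/6 y²` on `[0, 2]`, and `1 + √2 < 18/7`.
-/

section Series

open NormedSpace

theorem hasSum_pow_mul_half {R : Type*} [Semiring R] [TopologicalSpace R] [IsTopologicalSemiring R]
    {a : ℕ → R} {s x : R} (h : HasSum (fun n ↦ (x ^ 2) ^ n * a n) s) :
    HasSum (fun i ↦ x ^ i * a (i / 2)) ((1 + x) * s) := by
  rw [add_mul, one_mul]
  refine HasSum.even_add_odd ?_ ?_
  · simpa only [pow_mul, Nat.mul_div_cancel_left _ two_pos] using h
  · have half_odd (n : ℕ) : (2 * n + 1) / 2 = n := by lia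
    simpa only [half_odd, pow_succ', pow_mul, mul_assoc] using h.mul_left x

variable {𝔸 : Type*} [NormedDivisionRing 𝔸] [NormedAlgebra ℚ 𝔸] [CompleteSpace 𝔸]

theorem hasSum_pow_div_factorial_half (x : 𝔸) :
    HasSum (fun i : ℕ ↦ x ^ i / (Nat.factorial (i / 2) : 𝔸)) ((1 + x) * exp (x ^ 2)) := by
  have exp_series := expSeries_div_hasSum_exp (x ^ 2)
  simp only [div_eq_mul_inv] at exp_series ⊢
  exact hasSum_pow_mul_half (a := fun n ↦ (Nat.factorial n : 𝔸)⁻¹) exp_series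

theorem hasSum_pow_add_two_div_factorial_half (x : 𝔸) :
    HasSum (fun i : ℕ ↦ x ^ (i + 2) / (Nat.factorial ((i + 2) / 2) : 𝔸))
      ((1 + x) * (exp (x ^ 2) - 1)) := by
  have tail := (hasSum_nat_add_iff' 2).mpr (hasSum_pow_div_factorial_half x)
  simpa [Finset.sum_range_succ, mul_sub] using tail

end Series

section ExpBounds

open Real

theorem abs_exp_sub_sum_range_le {x : ℝ} {n : ℕ} (hx : |x| ≤ (n + 1) / 2) :
    |exp x - ∑ m ∈ Finset.range n, x ^ m / (Nat.factorial m : ℝ)|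
      ≤ 2 * |x| ^ n / (Nat.factorial n : ℝ) := by
  have ratio_le : ‖(x : ℂ)‖ / n.succ ≤ 1 / 2 := by
    rw [Complex.norm_real, norm_eq_abs, div_le_iff₀ (by positivity)]
    push_cast
    linarith
  have bound := Complex.exp_bound' ratio_le
  rw [Complex.norm_real, norm_eq_abs, div_mul_eq_mul_div, mul_comm _ (2 : ℝ)] at bound
  exact_mod_cast bound

theorem abs_exp_sub_one_sub_id_le {x : ℝ} (hx : |x| ≤ 2) :
    |exp x - 1 - x| ≤ 7 / 6 * x ^ 2 := by
  have remainder_le : |exp x - (1 + x + x ^ 2 / 2)| ≤ |x| * x ^ 2 / 3 := by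
    have taylor : ∑ m ∈ Finset.range 3, x ^ m / (Nat.factorial m : ℝ) = 1 + x + x ^ 2 / 2 := by
      simp [Finset.sum_range_succ]
    calc |exp x - (1 + x + x ^ 2 / 2)|
        ≤ 2 * |x| ^ 3 / (Nat.factorial 3 : ℝ) :=
          taylor ▸ abs_exp_sub_sum_range_le (hx.trans (by norm_num))
      _ = |x| * x ^ 2 / 3 := by
          rw [← sq_abs x, show Nat.factorial 3 = 6 from rfl]
          push_cast
          ring
  calc |exp x - 1 - x|
      = |(exp x - (1 + x + x ^ 2 / 2)) + x ^ 2 / 2| := by ring_nf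
    _ ≤ |exp x - (1 + x + x ^ 2 / 2)| + |x ^ 2 / 2| := abs_add_le _ _
    _ ≤ |x| * x ^ 2 / 3 + x ^ 2 / 2 := by
        rw [abs_of_nonneg (by positivity : 0 ≤ x ^ 2 / 2)]
        gcongr
    _ ≤ 2 * x ^ 2 / 3 + x ^ 2 / 2 := by gcongr
    _ = 7 / 6 * x ^ 2 := by ring

theorem sq_add_cube_le_one_add_mul_exp_sq_sub_one {x : ℝ} (hx : -1 ≤ x) :
    x ^ 2 + x ^ 3 ≤ (1 + x) * (exp (x ^ 2) - 1) :=
  calc x ^ 2 + x ^ 3 = (1 + x) * x ^ 2 := by ring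
    _ ≤ (1 + x) * (exp (x ^ 2) - 1) := by
        gcongr
        · linarith
        · linarith [add_one_le_exp (x ^ 2)]

theorem one_add_mul_exp_sq_sub_one_sub_sq_lt {x : ℝ} (hx₀ : x ≠ 0) (hx : x ≤ √2) :
    (1 + x) * (exp (x ^ 2) - 1 - x ^ 2) < 3 * x ^ 4 := by
  have remainder_pos : 0 < exp (x ^ 2) - 1 - x ^ 2 := by
    linarith [add_one_lt_exp (pow_ne_zero 2 hx₀)]
  obtain le_neg_one | neg_one_le := le_total x (-1)
  · calc (1 + x) * (exp (x ^ 2) - 1 - x ^ 2) ≤ 0 :=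
          mul_nonpos_of_nonpos_of_nonneg (by linarith) remainder_pos.le
      _ < 3 * x ^ 4 := by positivity
  · have sq_le_two : x ^ 2 ≤ 2 :=
      (Real.sq_le zero_le_two).mpr ⟨by linarith [one_le_sqrt.mpr (one_le_two (α := ℝ))], hx⟩
    have one_add_lt : 1 + x < 18 / 7 := by nlinarith
    calc (1 + x) * (exp (x ^ 2) - 1 - x ^ 2)
        < 18 / 7 * (exp (x ^ 2) - 1 - x ^ 2) := by gcongr
      _ ≤ 18 / 7 * (7 / 6 * (x ^ 2) ^ 2) := by
          gcongr
          exact le_of_abs_le (abs_exp_sub_one_sub_id_le (by rwa [abs_sq]))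
      _ = 3 * x ^ 4 := by ring

theorem one_add_mul_exp_sq_sub_one_lt {x : ℝ} (hx₀ : x ≠ 0) (hx : x ≤ √2) :
    (1 + x) * (exp (x ^ 2) - 1) < x ^ 2 + x ^ 3 + 3 * x ^ 4 := by
  linarith [one_add_mul_exp_sq_sub_one_sub_sq_lt hx₀ hx]

end ExpBounds

theorem stmt18_general {𝔸 : Type*} [NormedDivisionRing 𝔸] [NormedAlgebra ℚ 𝔸] [CompleteSpace 𝔸] :
    (∀ x : 𝔸, HasSum (fun i : ℕ ↦ x ^ i / (Nat.factorial (i / 2) : 𝔸))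
      ((1 + x) * NormedSpace.exp (x ^ 2))) ∧
    (∀ x : ℝ, -1 ≤ x →
      x ^ 2 + x ^ 3 ≤ ∑' i : ℕ, x ^ (i + 2) / (Nat.factorial ((i + 2) / 2) : ℝ)) ∧
    ∀ x : ℝ, x ≠ 0 → x ≤ √2 →
      ∑' i : ℕ, x ^ (i + 2) / (Nat.factorial ((i + 2) / 2) : ℝ) < x ^ 2 + x ^ 3 + 3 * x ^ 4 := by
  have tail_eq (x : ℝ) : ∑' i : ℕ, x ^ (i + 2) / (Nat.factorial ((i + 2) / 2) : ℝ)
      = (1 + x) * (Real.exp (x ^ 2) - 1) := by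
    rw [Real.exp_eq_exp_ℝ, (hasSum_pow_add_two_div_factorial_half x).tsum_eq]
  refine ⟨hasSum_pow_div_factorial_half, fun x hx ↦ ?_, fun x hx₀ hx ↦ ?_⟩
  · exact (sq_add_cube_le_one_add_mul_exp_sq_sub_one hx).trans_eq (tail_eq x).symm
  · exact (tail_eq x).trans_lt (one_add_mul_exp_sq_sub_one_lt hx₀ hx)

/-- the power series `Σ xⁱ/⌊i/2⌋!`: for every real `x`,
`Σ_{i=0}^∞ xⁱ/⌊i/2⌋! = (1+x)·e^{x²}`, and for every `x ∈ (0, 1.33]`,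
`x² + x³ ≤ Σ_{i=2}^∞ xⁱ/⌊i/2⌋! < x² + x³ + 3x⁴`. -/
theorem stmt18 :
    (∀ x : ℝ, ∑' i : ℕ, x ^ i / (Nat.factorial (i / 2) : ℝ)
      = (1 + x) * Real.exp (x ^ 2)) ∧
    ∀ x : ℝ, x ∈ Set.Ioc (0:ℝ) 1.33 →
      x ^ 2 + x ^ 3 ≤ (∑' i : ℕ, x ^ (i + 2) / (Nat.factorial ((i + 2) / 2) : ℝ)) ∧
      (∑' i : ℕ, x ^ (i + 2) / (Nat.factorial ((i + 2) / 2) : ℝ))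
        < x ^ 2 + x ^ 3 + 3 * x ^ 4 := by
  obtain ⟨series, lower, upper⟩ := stmt18_general (𝔸 := ℝ)
  exact ⟨fun x ↦ Real.exp_eq_exp_ℝ ▸ (series x).tsum_eq, fun x ⟨hx₀, hx⟩ ↦
    ⟨lower x (by linarith), upper x hx₀.ne' (hx.trans (Real.le_sqrt_of_sq_le (by norm_num)))⟩⟩
end
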